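/- arXiv:math/0209133 — 2 statements merged into one kernel-verified Lean document; each statement's English description precedes it below -/
import Mathlib

section
/- For all i ≠ j in {1,…,r}, the q-Serre relation holds in the q-shuffle algebra: Σ_{k+l=1−a_{ij}} (−1)^k [1−a_{ij} choose k]_i · w_i^{*k} * w_j * w_i^{*l} = 0, where w_i^{*k} denotes the k-fold q-shuffle power w_i * w_i * ⋯ * w_i (k factors). -/
open scoped BigOperators

noncomputable section

/-- The field `ℚ(q)` of rational functions over `ℚ`. -/
abbrev K : Type := RatFunc ℚ

/-- The indeterminate `q`. -/
abbrev qq : K := RatFunc.X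

/-- Words on the alphabet `{w_1, …, w_r}` (the free monoid `M`). -/
abbrev Word (r : ℕ) := List (Fin r)

/-- The space `F` with basis the words, as finitely supported families of coefficients. -/
abbrev FA (r : ℕ) := Word r →₀ K

variable {r : ℕ}

/-- `(|w|, |x|)` : the symmetric bilinear form evaluated on the degrees of two words,
where `p i j = (α_i, α_j)` is the form on simple roots. -/
def pairW (p : Fin r → Fin r → ℤ) (w x : Word r) : ℤ :=
  (w.map fun i => (x.map fun j => p i j).sum).sum

/-- Auxiliary q-shuffle on *reversed* words:
`shAux p w x` is the q-shuffle of `w.reverse` and `x.reverse`; it implements the recursion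
`(w·a) * (x·b) = (w * (x·b))·a + q^{-(|w·a|,|b|)} ((w·a) * x)·b`, `w[] * x = x * w[] = x`. -/
def shAux (p : Fin r → Fin r → ℤ) : Word r → Word r → FA r
  | [], x => Finsupp.single x.reverse 1
  | w, [] => Finsupp.single w.reverse 1
  | a :: w, b :: x =>
      Finsupp.mapDomain (fun u => u ++ [a]) (shAux p w (b :: x))
      + (qq ^ (-(pairW p (a :: w) [b]))) •
          Finsupp.mapDomain (fun u => u ++ [b]) (shAux p (a :: w) x)
  termination_by w x => w.length + x.length
  decreasing_by all_goals (first | (simp only [List.length_cons]; omega) | omega)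

/-- The q-shuffle product `*` on `F`, extended bilinearly from words. -/
def shuffle (p : Fin r → Fin r → ℤ) (f g : FA r) : FA r :=
  f.sum fun w c => g.sum fun x d => (c * d) • shAux p w.reverse x.reverse

/-- `k`-fold power for the q-shuffle product (the empty word for `k = 0`). -/
def shPow (p : Fin r → Fin r → ℤ) (f : FA r) : ℕ → FA r
  | 0 => Finsupp.single ([] : Word r) 1
  | k + 1 => shuffle p f (shPow p f k)

/-- The q-integer `[n]_i = (q_i^n − q_i^{−n})/(q_i − q_i^{−1})` with `q_i = q^{d_i}`. -/
def qInt (di : ℤ) (n : ℤ) : K :=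
  (qq ^ (di * n) - qq ^ (-(di * n))) / (qq ^ di - qq ^ (-di))

/-- The q-binomial coefficient `[m choose k]_i = [m]_i⋯[m−k+1]_i / ([k]_i⋯[1]_i)`. -/
def qBinom (di : ℤ) (m k : ℕ) : K :=
  (∏ t ∈ Finset.range k, qInt di ((m : ℤ) - t)) / (∏ t ∈ Finset.range k, qInt di ((t : ℤ) + 1))

/-- The data of the Cartan matrix `[a_{ij}]` of a finite-dimensional complex simple
Lie algebra of rank `r`: an integral matrix with `2` on the diagonal and nonpositive
off-diagonal entries, symmetrizable by `d_i ∈ {1,2,3}`, whose symmetrization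
`(α_i, α_j) = d_i a_{ij}` is positive definite, and which is indecomposable. -/
structure CartanData (r : ℕ) where
  a : Fin r → Fin r → ℤ
  d : Fin r → ℤ
  diag : ∀ i, a i i = 2
  offdiag : ∀ i j, i ≠ j → a i j ≤ 0
  dval : ∀ i, d i = 1 ∨ d i = 2 ∨ d i = 3
  dsymm : ∀ i j, d i * a i j = d j * a j i
  posdef : ∀ v : Fin r → ℚ, v ≠ 0 → 0 < ∑ i, ∑ j, v i * v j * ((d i * a i j : ℤ) : ℚ)
  indec : ∀ s : Finset (Fin r), s.Nonempty → s ≠ Finset.univ →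
    ∃ i ∈ s, ∃ j, j ∉ s ∧ a i j ≠ 0

/-- The symmetric bilinear form `(α_i, α_j) = d_i a_{ij}` on simple roots. -/
def CartanData.p (C : CartanData r) : Fin r → Fin r → ℤ := fun i j => C.d i * C.a i j


namespace QS

/-- bilinear version of the shuffle -/
def B (p : Fin r → Fin r → ℤ) : FA r →ₗ[K] FA r →ₗ[K] FA r :=
  Finsupp.linearCombination K
    (fun w => Finsupp.linearCombination K (fun x => shAux p w.reverse x.reverse))

lemma shuffle_eq (p : Fin r → Fin r → ℤ) (f g : FA r) : shuffle p f g = B p f g := by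
  simp only [shuffle, B, Finsupp.linearCombination_apply, Finsupp.sum, LinearMap.sum_apply,
    LinearMap.smul_apply, Finset.smul_sum, mul_smul]

lemma B_single (p : Fin r → Fin r → ℤ) (w x : Word r) :
    B p (Finsupp.single w 1) (Finsupp.single x 1) = shAux p w.reverse x.reverse := by
  simp [B]

/-- strip last letter `c` -/
def D (c : Fin r) : FA r →ₗ[K] FA r :=
  Finsupp.lcomapDomain (fun u => u ++ [c]) (fun _ _ h => List.append_left_injective _ h)

lemma D_apply (c : Fin r) (f : FA r) (u : Word r) : D c f u = f (u ++ [c]) := rfl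

/-- twist -/
def T (p : Fin r → Fin r → ℤ) (c : Fin r) : FA r →ₗ[K] FA r :=
  Finsupp.linearCombination K (fun w => Finsupp.single w (qq ^ (-(pairW p w [c]))))

lemma T_single (p : Fin r → Fin r → ℤ) (c : Fin r) (w : Word r) :
    T p c (Finsupp.single w 1) = (qq ^ (-(pairW p w [c]))) • Finsupp.single w 1 := by
  simp [T]

lemma D_map (c a : Fin r) (f : FA r) :
    D c (Finsupp.mapDomain (fun u => u ++ [a]) f) = if a = c then f else 0 := by
  ext u
  rw [D_apply]
  split_ifs with h
  · subst h
    exact Finsupp.mapDomain_apply (fun _ _ h => List.append_left_injective _ h) f u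
  · rw [Finsupp.mapDomain_of_notMem_range]
    · rfl
    · rintro ⟨v, hv⟩
      simp at hv
      exact h hv.2

lemma D_single_snoc (c a : Fin r) (w : Word r) :
    D c (Finsupp.single (w ++ [a]) 1) = if a = c then Finsupp.single w 1 else 0 := by
  rw [← D_map c a (Finsupp.single w 1), Finsupp.mapDomain_single]

lemma D_single_nil (c : Fin r) : D c (Finsupp.single ([] : Word r) 1) = 0 := by
  ext u
  rw [D_apply]
  simp

lemma pairW_rev (p : Fin r → Fin r → ℤ) (w : Word r) (c : Fin r) :
    pairW p w.reverse [c] = pairW p w [c] := by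
  simp [pairW, List.sum_reverse]

lemma pairW_snoc (p : Fin r → Fin r → ℤ) (w : Word r) (a c : Fin r) :
    pairW p (w ++ [a]) [c] = pairW p w [c] + p a c := by
  simp [pairW]

lemma pairW_cons (p : Fin r → Fin r → ℤ) (w : Word r) (a c : Fin r) :
    pairW p (a :: w) [c] = p a c + pairW p w [c] := by
  simp [pairW]

lemma q0 : (qq : K) ≠ 0 := RatFunc.X_ne_zero

lemma B_nil_left (p : Fin r → Fin r → ℤ) (x : Word r) :
    B p (Finsupp.single [] 1) (Finsupp.single x 1) = Finsupp.single x 1 := by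
  rw [B_single]; simp [shAux]

lemma B_nil_right (p : Fin r → Fin r → ℤ) (x : Word r) :
    B p (Finsupp.single x 1) (Finsupp.single [] 1) = Finsupp.single x 1 := by
  rw [B_single]
  rcases h : x.reverse with _ | ⟨a, w⟩
  · obtain rfl : x = [] := by simpa using h
    simp [shAux]
  · simp only [List.reverse_nil, shAux]
    rw [← h, List.reverse_reverse]

lemma ext2 {M : Type*} [AddCommGroup M] [Module K M] (F G : FA r →ₗ[K] FA r →ₗ[K] M)
    (h : ∀ w x, F (Finsupp.single w 1) (Finsupp.single x 1)
      = G (Finsupp.single w 1) (Finsupp.single x 1)) (X Y : FA r) : F X Y = G X Y := by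
  have : F = G := by
    apply Finsupp.lhom_ext'
    intro w
    apply LinearMap.ext_ring
    apply Finsupp.lhom_ext'
    intro x
    apply LinearMap.ext_ring
    exact h w x
  rw [this]

lemma B_one_left (p : Fin r → Fin r → ℤ) (X : FA r) : B p (Finsupp.single [] 1) X = X := by
  have : B p (Finsupp.single [] 1) = LinearMap.id := by
    apply Finsupp.lhom_ext'
    intro w
    apply LinearMap.ext_ring
    exact B_nil_left p w
  rw [this]; rfl

lemma leib (p : Fin r → Fin r → ℤ) (c : Fin r) (X Y : FA r) :
    D c (B p X Y) = B p (D c X) Y + B p (T p c X) (D c Y) := by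
  refine ext2 ((B p).compr₂ (D c)) ((B p).comp (D c) + ((B p).compl₁₂ (T p c) (D c))) ?_ X Y
  intro w x
  simp only [LinearMap.compr₂_apply, LinearMap.add_apply, LinearMap.comp_apply,
    LinearMap.compl₁₂_apply]
  rcases List.eq_nil_or_concat' w with rfl | ⟨w, a, rfl⟩
  · rw [B_nil_left, D_single_nil, T_single]
    simp [pairW, B_one_left]
  rcases List.eq_nil_or_concat' x with rfl | ⟨x, b, rfl⟩
  · rw [B_nil_right, D_single_nil, D_single_snoc]
    split_ifs <;> simp [B_nil_right]
  rw [B_single, D_single_snoc, D_single_snoc, T_single]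
  simp only [List.reverse_append, List.reverse_cons, List.reverse_nil, List.nil_append,
    List.singleton_append, shAux, map_add, map_smul, D_map]
  have e : pairW p (a :: w.reverse) [b] = pairW p (w ++ [a]) [b] := by
    rw [pairW_cons, pairW_rev, pairW_snoc, add_comm]
  rw [e]
  congr 1
  · split_ifs
    · rw [B_single]; simp
    · simp
  · split_ifs with h
    · subst h
      rw [LinearMap.smul_apply, B_single]; simp
    · simp

lemma T_map (p : Fin r → Fin r → ℤ) (c a : Fin r) (f : FA r) :
    T p c (Finsupp.mapDomain (fun u => u ++ [a]) f)
      = (qq ^ (-(p a c))) • Finsupp.mapDomain (fun u => u ++ [a]) (T p c f) := by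
  induction f using Finsupp.induction_linear with
  | zero => simp
  | add f g hf hg => simp only [Finsupp.mapDomain_add, map_add, hf, hg, smul_add]
  | single w s =>
    have : Finsupp.single w s = s • (Finsupp.single w 1 : FA r) := by simp
    rw [this]
    simp only [Finsupp.mapDomain_smul, map_smul, Finsupp.mapDomain_single, T_single, pairW_snoc,
      smul_smul, neg_add, zpow_add₀ q0]
    congr 1
    ring

lemma T_shAux (p : Fin r → Fin r → ℤ) (c : Fin r) (w x : Word r) :
    T p c (shAux p w x) = (qq ^ (-(pairW p w [c] + pairW p x [c]))) • shAux p w x := by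
  induction w, x using shAux.induct with
  | case1 x =>
    rw [shAux, T_single, pairW_rev]
    simp [pairW]
  | case2 w h =>
    rcases w with _ | ⟨a, w⟩
    · simp [shAux, T_single, pairW]
    · rw [shAux, T_single, pairW_rev]
      · simp [pairW]
      · exact h
  | case3 a w b x h1 h2 =>
    rw [shAux, map_add, map_smul, T_map, T_map, h1, h2, smul_add]
    simp only [Finsupp.mapDomain_smul, smul_smul, pairW_cons]
    congr 2
    · simp only [← zpow_add₀ q0]; congr 1; ring
    · simp only [← zpow_add₀ q0]; congr 1; ring

lemma T_B (p : Fin r → Fin r → ℤ) (c : Fin r) (X Y : FA r) :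
    T p c (B p X Y) = B p (T p c X) (T p c Y) := by
  refine ext2 ((B p).compr₂ (T p c)) ((B p).compl₁₂ (T p c) (T p c)) ?_ X Y
  intro w x
  simp only [LinearMap.compr₂_apply, LinearMap.compl₁₂_apply]
  rw [T_single, T_single, map_smul, map_smul, LinearMap.smul_apply, B_single, T_shAux, smul_smul,
    pairW_rev, pairW_rev, ← zpow_add₀ q0, neg_add, add_comm]

lemma shAux_nil (p : Fin r → Fin r → ℤ) (w x : Word r) :
    shAux p w x [] = if w = [] ∧ x = [] then 1 else 0 := by
  have hm : ∀ (a : Fin r) (f : FA r), Finsupp.mapDomain (fun u => u ++ [a]) f [] = 0 := by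
    intro a f
    apply Finsupp.mapDomain_of_notMem_range
    rintro ⟨v, hv⟩
    simp at hv
  rcases w with _ | ⟨a, w⟩
  · simp [shAux, Finsupp.single_apply]
  · rcases x with _ | ⟨b, x⟩
    · simp [shAux]
    · simp [shAux, hm]

lemma B_at_nil (p : Fin r → Fin r → ℤ) (X Y : FA r) : B p X Y [] = X [] * Y [] := by
  refine ext2 ((B p).compr₂ (Finsupp.lapply []))
    ((LinearMap.mul K K).compl₁₂ (Finsupp.lapply []) (Finsupp.lapply [])) ?_ X Y
  intro w x
  simp only [LinearMap.compr₂_apply, LinearMap.compl₁₂_apply, Finsupp.lapply_apply, B_single,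
    shAux_nil, LinearMap.mul_apply', Finsupp.single_apply, List.reverse_eq_nil_iff]
  split_ifs <;> simp_all

lemma ext_D (f g : FA r) (h0 : f [] = g []) (h : ∀ c, D c f = D c g) : f = g := by
  ext u
  rcases List.eq_nil_or_concat' u with rfl | ⟨u, a, rfl⟩
  · exact h0
  · exact DFunLike.congr_fun (h a) u

/-! ### q-numbers -/

lemma q_pow_ne (N : ℕ) (hN : 0 < N) : (qq : K) ^ N ≠ 1 := by
  intro h
  have h2 : (Polynomial.X ^ N : Polynomial ℚ) = 1 := by
    apply RatFunc.algebraMap_injective ℚ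
    rw [map_pow, RatFunc.algebraMap_X, map_one]
    exact h
  have := congrArg Polynomial.natDegree h2
  simp at this
  omega

lemma q_sub_ne (N : ℤ) (hN : 0 < N) : (qq : K) ^ N - qq ^ (-N) ≠ 0 := by
  intro h
  have h1 : (qq : K) ^ (N + N) = 1 := by
    rw [zpow_add₀ q0]
    nth_rewrite 1 [sub_eq_zero.mp h]
    rw [← zpow_add₀ q0]; simp
  apply q_pow_ne (N + N).toNat (by omega)
  rw [← zpow_natCast, Int.toNat_of_nonneg (by omega)]
  exact h1

lemma qInt_ne (d : ℤ) (hd : 0 < d) (n : ℤ) (hn : 0 < n) : qInt d n ≠ 0 :=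
  div_ne_zero (q_sub_ne _ (by positivity)) (q_sub_ne _ hd)

lemma qInt_zero (d : ℤ) : qInt d 0 = 0 := by simp [qInt]

lemma qInt_one (d : ℤ) (hd : 0 < d) : qInt d 1 = 1 := by
  simp only [qInt, mul_one]
  exact div_self (q_sub_ne _ hd)

lemma qInt_add (d s t : ℤ) :
    qInt d (s + t) = qq ^ (d * t) * qInt d s + qq ^ (-(d * s)) * qInt d t := by
  simp only [qInt, ← mul_div_assoc, ← add_div]
  congr 1
  simp only [mul_sub, ← zpow_add₀ q0]
  ring_nf

lemma qBinom_succ (d : ℤ) (hd : 0 < d) (m k : ℕ) :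
    qBinom d m (k + 1) * qInt d (k + 1) = qBinom d m k * qInt d (m - k) := by
  have h1 := qInt_ne d hd (k + 1) (by positivity)
  simp only [qBinom, Finset.prod_range_succ]
  field_simp

lemma qBinom_succ_succ (d : ℤ) (hd : 0 < d) (m k : ℕ) :
    qBinom d (m + 1) (k + 1) * qInt d (k + 1) = qBinom d m k * qInt d (m + 1) := by
  have h1 := qInt_ne d hd (k + 1) (by positivity)
  rw [qBinom, Finset.prod_range_succ', qBinom, Finset.prod_range_succ]
  have : ∀ t : ℕ, ((m + 1 : ℕ) : ℤ) - (t + 1 : ℕ) = (m : ℤ) - t := by intro t; push_cast; ring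
  simp only [this]
  push_cast
  rw [sub_zero]
  field_simp

lemma pascal (d : ℤ) (hd : 0 < d) (m k : ℕ) :
    qBinom d (m + 1) (k + 1) = qq ^ (d * (k + 1)) * qBinom d m (k + 1)
      + qq ^ (d * (k - m)) * qBinom d m k := by
  have h1 := qInt_ne d hd (k + 1) (by positivity)
  apply mul_right_cancel₀ h1
  rw [qBinom_succ_succ d hd, add_mul, mul_assoc, qBinom_succ d hd]
  have := qInt_add d (m - k) (k + 1)
  rw [show ((m : ℤ) - k + (k + 1)) = m + 1 by ring,
    show -(d * ((m : ℤ) - k)) = d * (k - m) by ring] at this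
  rw [this]
  ring

lemma partial_sum (d : ℤ) (hd : 0 < d) (m n : ℕ) :
    ∑ k ∈ Finset.range (n + 1), (-1 : K) ^ k * qBinom d (m + 1) k * qq ^ (d * k * m)
      = (-1) ^ n * qq ^ (d * n * (m + 1)) * qBinom d m n := by
  induction n with
  | zero => simp [qBinom]
  | succ n ih =>
    rw [Finset.sum_range_succ, ih, pascal d hd, pow_succ]
    have e1 : (qq : K) ^ (d * n * (m + 1)) = qq ^ (d * (n - m)) * qq ^ (d * (n + 1) * m) := by
      rw [← zpow_add₀ q0]; ring_nf
    have e2 : (qq : K) ^ (d * (n + 1) * (m + 1)) = qq ^ (d * (n + 1)) * qq ^ (d * (n + 1) * m) := by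
      rw [← zpow_add₀ q0]; ring_nf
    push_cast
    rw [e1, e2]
    ring

lemma qBinom_self_succ (d : ℤ) (m : ℕ) : qBinom d m (m + 1) = 0 := by
  simp [qBinom, Finset.prod_range_succ, qInt_zero]

lemma total_sum (d : ℤ) (hd : 0 < d) (m : ℕ) :
    ∑ k ∈ Finset.range (m + 2), (-1 : K) ^ k * qBinom d (m + 1) k * qq ^ (d * k * m) = 0 := by
  rw [partial_sum d hd, qBinom_self_succ, mul_zero]

/-- `c k = 1 + q_i^{-2} + ⋯` -/
def cc (d : ℤ) (k : ℕ) : K := qq ^ (d * (1 - k)) * qInt d k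

lemma cc_zero (d : ℤ) : cc d 0 = 0 := by simp [cc, qInt_zero]

lemma cc_one (d : ℤ) (hd : 0 < d) : cc d 1 = 1 := by simp [cc, qInt_one d hd]

lemma cc_add (d : ℤ) (k l : ℕ) : cc d (k + l) = cc d k + qq ^ (-(k * (d * 2))) * cc d l := by
  simp only [cc]
  push_cast
  rw [qInt_add, mul_add, ← mul_assoc, ← mul_assoc, ← mul_assoc]
  simp only [← zpow_add₀ q0]
  ring_nf

/-! ### powers -/

section pow
variable (p : Fin r → Fin r → ℤ) (i : Fin r)

/-- powers of `w_i` -/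
def P (k : ℕ) : FA r := shPow p (Finsupp.single [i] 1) k

lemma P_zero : P p i 0 = Finsupp.single [] 1 := rfl

lemma P_succ (k : ℕ) : P p i (k + 1) = B p (Finsupp.single [i] 1) (P p i k) := by
  rw [P, shPow, shuffle_eq, P]

lemma D_letter (c : Fin r) : D c (Finsupp.single [i] 1) =
    if i = c then Finsupp.single ([] : Word r) 1 else 0 := D_single_snoc c i []

lemma T_letter (c : Fin r) : T p c (Finsupp.single [i] 1) =
    (qq ^ (-(p i c))) • Finsupp.single [i] 1 := by
  rw [T_single]; simp [pairW]

lemma T_P (c : Fin r) (k : ℕ) : T p c (P p i k) = (qq ^ (-(k * p i c))) • P p i k := by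
  induction k with
  | zero => rw [P_zero, T_single]; simp [pairW]
  | succ k ih =>
    rw [P_succ, T_B, ih, T_letter, map_smul, map_smul, LinearMap.smul_apply, smul_smul,
      ← zpow_add₀ q0]
    congr 2
    push_cast; ring

lemma D_P_ne (c : Fin r) (h : i ≠ c) (k : ℕ) : D c (P p i k) = 0 := by
  induction k with
  | zero => rw [P_zero, D_single_nil]
  | succ k ih => rw [P_succ, leib, ih, D_letter, if_neg h]; simp

lemma D_P (d : ℤ) (hd : 0 < d) (hp : p i i = d * 2) (k : ℕ) :
    D i (P p i k) = cc d k • P p i (k - 1) := by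
  induction k with
  | zero => rw [P_zero, D_single_nil, cc_zero, zero_smul]
  | succ k ih =>
    rw [P_succ, leib, ih, D_letter, if_pos rfl, B_one_left, T_letter, map_smul, map_smul,
      LinearMap.smul_apply, smul_smul, hp, add_comm k 1, cc_add, cc_one d hd]
    rcases k with _ | k
    · simp [cc_zero]
    · simp only [Nat.add_sub_cancel, Nat.add_sub_cancel_left]
      rw [← P_succ, add_smul, one_smul, mul_comm]
      simp

lemma P_nil (k : ℕ) : P p i (k + 1) [] = 0 := by
  rw [P_succ, B_at_nil]; simp

lemma P_mul (d : ℤ) (hd : 0 < d) (hp : p i i = d * 2) (n : ℕ) : ∀ k l : ℕ, k + l = n →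
    B p (P p i k) (P p i l) = P p i n := by
  induction n with
  | zero =>
    intro k l h
    obtain ⟨rfl, rfl⟩ : k = 0 ∧ l = 0 := by omega
    rw [P_zero, B_one_left]
  | succ n ih =>
    intro k l h
    apply ext_D
    · rw [B_at_nil, P_nil]
      rcases k with _ | k
      · obtain rfl : l = n + 1 := by omega
        rw [P_nil, mul_zero]
      · rw [P_nil, zero_mul]
    · intro c
      rw [leib]
      by_cases hc : i = c
      · subst hc
        rw [D_P p i d hd hp, D_P p i d hd hp, D_P p i d hd hp, T_P, hp, ← h, cc_add, add_smul]
        simp only [map_smul, LinearMap.smul_apply, smul_smul]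
        congr 1
        · rcases k with _ | k
          · simp [cc_zero]
          · rw [ih (k + 1 - 1) l (by omega), show k + 1 + l - 1 = n by omega]
        · rcases l with _ | l
          · simp [cc_zero]
          · rw [ih k (l + 1 - 1) (by omega), show k + (l + 1) - 1 = n by omega, mul_comm]
      · rw [D_P_ne _ _ _ hc, D_P_ne _ _ _ hc, D_P_ne _ _ _ hc]; simp

/-- `w_i^{*k} * w_j * w_i^{*l}` -/
def X (j : Fin r) (k l : ℕ) : FA r := B p (B p (P p i k) (Finsupp.single [j] 1)) (P p i l)

variable (j : Fin r)

lemma X_nil (k l : ℕ) : X p i j k l [] = 0 := by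
  rw [X, B_at_nil, B_at_nil]; simp

lemma D_X_other (c : Fin r) (hi : i ≠ c) (hj : j ≠ c) (k l : ℕ) : D c (X p i j k l) = 0 := by
  rw [X, leib, leib, D_P_ne _ _ _ hi, D_P_ne _ _ _ hi, D_letter, if_neg hj]; simp

lemma D_X_j (hij : i ≠ j) (d : ℤ) (hd : 0 < d) (hp : p i i = d * 2) (k l : ℕ) :
    D j (X p i j k l) = (qq ^ (-(k * p i j))) • P p i (k + l) := by
  have h1 : B p (P p i k) (Finsupp.single [] 1) = P p i k := P_mul p i d hd hp k k 0 rfl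
  rw [X, leib, leib, D_P_ne _ _ _ hij, D_P_ne _ _ _ hij, D_letter, if_pos rfl, T_P]
  simp only [map_zero, LinearMap.zero_apply, zero_add, add_zero, map_smul, LinearMap.smul_apply, h1]
  rw [P_mul p i d hd hp _ k l rfl]

lemma D_X_i (hij : i ≠ j) (d : ℤ) (hd : 0 < d) (hp : p i i = d * 2) (hs : p j i = p i j) (k l : ℕ) :
    D i (X p i j k l) = cc d k • X p i j (k - 1) l
      + (qq ^ (-(k * (d * 2)) - p i j) * cc d l) • X p i j k (l - 1) := by
  rw [X, leib, leib, D_P p i d hd hp, D_P p i d hd hp, D_letter, if_neg hij.symm, T_B, T_P, T_letter,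
    hp, hs, sub_eq_add_neg, zpow_add₀ q0]
  simp only [map_zero, add_zero, map_smul, LinearMap.smul_apply, smul_smul]
  congr 2
  ring

lemma serre (hij : i ≠ j) (d : ℤ) (hd : 0 < d) (hp : p i i = d * 2) (hs : p j i = p i j) (n : ℕ)
    (hn : p i j = -(d * n)) :
    ∑ k ∈ Finset.range (n + 2), ((-1 : K) ^ k * qBinom d (n + 1) k) • X p i j k (n + 1 - k) = 0 := by
  apply ext_D
  · rw [Finsupp.finsetSum_apply]
    apply Finset.sum_eq_zero
    intro k _
    rw [Finsupp.smul_apply, X_nil, smul_zero]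
  intro c
  rw [map_sum, map_zero]
  simp only [map_smul]
  by_cases hj : j = c
  · subst hj
    rw [← zero_smul K (P p i (n + 1)), ← total_sum d hd n, Finset.sum_smul]
    apply Finset.sum_congr rfl
    intro k hk
    rw [Finset.mem_range] at hk
    rw [D_X_j p i j hij d hd hp, smul_smul, hn, show k + (n + 1 - k) = n + 1 by omega]
    congr 3
    ring
  by_cases hi : i = c
  · subst hi
    simp only [D_X_i p i j hij d hd hp hs, smul_add, Finset.sum_add_distrib, smul_smul]
    rw [Finset.sum_range_succ', cc_zero, mul_zero, zero_smul, add_zero,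
      Finset.sum_range_succ _ (n + 1), Nat.sub_self, cc_zero, mul_zero, mul_zero, zero_smul, add_zero,
      ← Finset.sum_add_distrib]
    apply Finset.sum_eq_zero
    intro k hk
    rw [Finset.mem_range] at hk
    rw [Nat.add_sub_cancel, show n + 1 - (k + 1) = n - k by omega,
      show n + 1 - k - 1 = n - k by omega, ← add_smul]
    convert zero_smul K _ using 2
    have hb := qBinom_succ d hd (n + 1) k
    have e1 : cc d (k + 1) = qq ^ (-(d * k)) * qInt d (k + 1) := by
      simp only [cc]; push_cast; ring_nf
    have e2 : qq ^ (-(k * (d * 2)) - p i j) * cc d (n + 1 - k)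
        = qq ^ (-(d * k)) * qInt d ((n + 1 : ℕ) - k) := by
      rw [cc, ← mul_assoc, ← zpow_add₀ q0, hn, Nat.cast_sub (by omega)]
      congr 2
      push_cast; ring
    rw [e1, e2, pow_succ]
    linear_combination (-(-1 : K) ^ k * qq ^ (-(d * k))) * hb
  · apply Finset.sum_eq_zero
    intro k _
    rw [D_X_other p i j c hi hj, smul_zero]

end pow

end QS

/-- Lemma 2.2: the q-Serre relations hold in the q-shuffle algebra:
`Σ_{k+l=1−a_{ij}} (−1)^k [1−a_{ij} choose k]_i  w_i^{*k} * w_j * w_i^{*l} = 0` for `i ≠ j`. -/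
theorem q_serre_in_shuffle_algebra {r : ℕ} (hr : 1 ≤ r) (C : CartanData r)
    (i j : Fin r) (hij : i ≠ j) :
    ∑ k ∈ Finset.range ((1 - C.a i j).toNat + 1),
      ((-1 : K) ^ k * qBinom (C.d i) ((1 - C.a i j).toNat) k) •
        shuffle C.p
          (shuffle C.p (shPow C.p (Finsupp.single [i] 1) k) (Finsupp.single [j] 1))
          (shPow C.p (Finsupp.single [i] 1) ((1 - C.a i j).toNat - k)) = 0 := by
  have hd : 0 < C.d i := by rcases C.dval i with h | h | h <;> omega
  have ha := C.offdiag i j hij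
  obtain ⟨n, hn⟩ : ∃ n : ℕ, C.a i j = -(n : ℤ) := ⟨(-C.a i j).toNat, by omega⟩
  have hm : (1 - C.a i j).toNat = n + 1 := by omega
  have := QS.serre C.p i j hij (C.d i) hd (by simp [CartanData.p, C.diag])
    (by simp [CartanData.p, C.dsymm i j]) n (by simp [CartanData.p, hn])
  rw [hm]
  simp only [QS.shuffle_eq]
  exact this
end
end

section
/- (Rosso–Green embedding) The kernel of Ξ equals the two-sided ideal of the concatenation algebra F generated by the q-Serre elements S_{ij} (i ≠ j). Consequently, Ξ induces a ℚ(q)-algebra isomorphism from U_q(n) — the free associative ℚ(q)-algebra on generators e_1,…,e_r modulo the two-sided ideal generated by the elements Σ_{k+l=1−a_{ij}} (−1)^k [1−a_{ij} choose k]_i e_i^k e_j e_i^l (i ≠ j) — onto the subalgebra 𝒰 of the q-shuffle algebra (F, *). -/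
open scoped BigOperators

noncomputable section

variable {r : ℕ}

/-- Membership in `𝒰`, the `ℚ(q)`-subalgebra of `(F, *)` generated by the letters `w_i`. -/
inductive InU (p : Fin r → Fin r → ℤ) : FA r → Prop
  | letter (i : Fin r) : InU p (Finsupp.single [i] 1)
  | one : InU p (Finsupp.single ([] : Word r) 1)
  | add : ∀ {f g : FA r}, InU p f → InU p g → InU p (f + g)
  | smul : ∀ (c : K) {f : FA r}, InU p f → InU p (c • f)
  | mul : ∀ {f g : FA r}, InU p f → InU p g → InU p (shuffle p f g)

/-- The concatenation product on `F`. -/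
def cmul (f g : FA r) : FA r :=
  f.sum fun w c => g.sum fun x d => Finsupp.single (w ++ x) (c * d)

/-- `Ξ` on a word: the q-shuffle product of its letters. -/
def xiWord (p : Fin r → Fin r → ℤ) : Word r → FA r
  | [] => Finsupp.single ([] : Word r) 1
  | i :: w => shuffle p (Finsupp.single [i] 1) (xiWord p w)

/-- The linear map `Ξ : (F, concatenation) → (F, *)`, `Ξ(w_{i₁}⋯w_{i_k}) = w_{i₁} * ⋯ * w_{i_k}`. -/
def xi (p : Fin r → Fin r → ℤ) (f : FA r) : FA r :=
  f.sum fun w c => c • xiWord p w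

/-- The q-Serre element `S_{ij} = Σ_{k+l=1−a_{ij}} (−1)^k [1−a_{ij} choose k]_i
w_i^k w_j w_i^l ∈ F` (concatenation powers). -/
def serre (C : CartanData r) (i j : Fin r) : FA r :=
  ∑ k ∈ Finset.range ((1 - C.a i j).toNat + 1),
    ((-1 : K) ^ k * qBinom (C.d i) ((1 - C.a i j).toNat) k) •
      Finsupp.single
        (List.replicate k i ++ [j] ++ List.replicate ((1 - C.a i j).toNat - k) i) 1

/-! ### The indeterminate -/

theorem qq_ne_zero : qq ≠ 0 := RatFunc.X_ne_zero

theorem qq_zpow_ne_one {n : ℤ} (hn : n ≠ 0) : qq ^ n ≠ 1 := by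
  have key : ∀ m : ℕ, m ≠ 0 → qq ^ m ≠ 1 := by
    intro m hm h
    have h1 : algebraMap (Polynomial ℚ) K (Polynomial.X ^ m) = algebraMap (Polynomial ℚ) K 1 := by
      rw [map_pow, RatFunc.algebraMap_X, map_one]; exact h
    have h2 := RatFunc.algebraMap_injective ℚ h1
    have h3 := congrArg Polynomial.natDegree h2
    simp at h3
    exact hm h3
  intro h
  rcases Int.natAbs_eq n with h' | h'
  · rw [h', zpow_natCast] at h
    exact key _ (by omega) h
  · rw [h', zpow_neg, zpow_natCast, inv_eq_one] at h
    exact key _ (by omega) h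

/-! ### Algebras with skew derivations -/

structure SkewData (p : Fin r → Fin r → ℤ) (A : Type) [Ring A] [Algebra K A] where
  th : Fin r → A
  k : Fin r → A →ₗ[K] A
  D : Fin r → A →ₗ[K] A
  R : Fin r → A →ₗ[K] A
  k_one : ∀ i, k i 1 = 1
  k_mul : ∀ i x y, k i (x * y) = k i x * k i y
  k_th : ∀ i j, k i (th j) = qq ^ (-p i j) • th j
  D_th : ∀ i j, D i (th j) = if i = j then 1 else 0
  R_th : ∀ i j, R i (th j) = if i = j then 1 else 0
  D_mul : ∀ i x y, D i (x * y) = D i x * y + k i x * D i y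
  R_mul : ∀ i x y, R i (x * y) = x * R i y + R i x * k i y
  ind : ∀ P : Submodule K A, 1 ∈ P → (∀ j, ∀ x ∈ P, th j * x ∈ P) → ∀ x, x ∈ P

namespace SkewData

variable {p : Fin r → Fin r → ℤ} {A : Type} [Ring A] [Algebra K A] (S : SkewData p A)

theorem D_one (i : Fin r) : S.D i 1 = 0 := by
  have h := S.D_mul i 1 1
  simpa [S.k_one] using h

theorem R_one (i : Fin r) : S.R i 1 = 0 := by
  have h := S.R_mul i 1 1
  simpa [S.k_one] using h

theorem D_th_mul (i j : Fin r) (x : A) :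
    S.D i (S.th j * x) = (if i = j then x else 0) + qq ^ (-p i j) • (S.th j * S.D i x) := by
  rw [S.D_mul, S.D_th, S.k_th]
  split_ifs <;> simp

theorem R_th_mul (i j : Fin r) (x : A) :
    S.R i (S.th j * x) = S.th j * S.R i x + (if i = j then S.k i x else 0) := by
  rw [S.R_mul, S.R_th]
  split_ifs <;> simp

theorem k_th_mul (i j : Fin r) (x : A) :
    S.k i (S.th j * x) = qq ^ (-p i j) • (S.th j * S.k i x) := by
  rw [S.k_mul, S.k_th]; simp

theorem zmul (a b : ℤ) : qq ^ a * qq ^ b = qq ^ (a + b) := (zpow_add₀ qq_ne_zero a b).symm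

theorem D_k (i j : Fin r) (x : A) : S.D j (S.k i x) = qq ^ (-p i j) • S.k i (S.D j x) := by
  have h := S.ind (LinearMap.ker (S.D j ∘ₗ S.k i - qq ^ (-p i j) • (S.k i ∘ₗ S.D j))) ?_ ?_ x
  · simpa [sub_eq_zero] using h
  · simp [S.k_one, S.D_one]
  · intro l y hy
    have hy' : S.D j (S.k i y) = qq ^ (-p i j) • S.k i (S.D j y) := by
      simpa [sub_eq_zero] using hy
    simp only [LinearMap.mem_ker, LinearMap.sub_apply, LinearMap.comp_apply,
      LinearMap.smul_apply, sub_eq_zero]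
    rw [S.k_th_mul, map_smul, S.D_th_mul, S.D_th_mul, hy', map_add, map_smul, S.k_th_mul]
    by_cases h : j = l
    · subst h
      simp only [if_true, smul_add, mul_smul_comm, smul_smul]
    · simp only [if_neg h, map_zero, zero_add, mul_smul_comm, smul_smul]
      congr 1
      ring

theorem k_k (a b : Fin r) (x : A) : S.k a (S.k b x) = S.k b (S.k a x) := by
  have h := S.ind (LinearMap.ker (S.k a ∘ₗ S.k b - S.k b ∘ₗ S.k a)) ?_ ?_ x
  · simpa [sub_eq_zero] using h
  · simp [S.k_one]
  · intro l y hy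
    have hy' : S.k a (S.k b y) = S.k b (S.k a y) := by simpa [sub_eq_zero] using hy
    simp only [LinearMap.mem_ker, LinearMap.sub_apply, LinearMap.comp_apply, sub_eq_zero]
    rw [S.k_th_mul, S.k_th_mul, map_smul, map_smul, S.k_th_mul, S.k_th_mul, hy', smul_comm]

theorem R_k' (i j : Fin r) (x : A) : S.R j (S.k i x) = qq ^ (-p i j) • S.k i (S.R j x) := by
  have h := S.ind (LinearMap.ker (S.R j ∘ₗ S.k i - qq ^ (-p i j) • (S.k i ∘ₗ S.R j))) ?_ ?_ x
  · simpa [sub_eq_zero] using h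
  · simp [S.k_one, S.R_one]
  · intro l y hy
    have hy' : S.R j (S.k i y) = qq ^ (-p i j) • S.k i (S.R j y) := by
      simpa [sub_eq_zero] using hy
    simp only [LinearMap.mem_ker, LinearMap.sub_apply, LinearMap.comp_apply,
      LinearMap.smul_apply, sub_eq_zero]
    rw [S.k_th_mul, map_smul, S.R_th_mul, S.R_th_mul, hy', map_add, S.k_th_mul]
    by_cases h : j = l
    · subst h
      simp only [if_true, smul_add, mul_smul_comm, smul_smul, S.k_k j i]
    · simp only [if_neg h, map_zero, add_zero, mul_smul_comm, smul_smul]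
      rw [mul_comm]

/-- Left and right skew derivations commute. -/
theorem D_R (hs : ∀ a b, p a b = p b a) (i j : Fin r) (x : A) :
    S.D j (S.R i x) = S.R i (S.D j x) := by
  have h := S.ind (LinearMap.ker (S.D j ∘ₗ S.R i - S.R i ∘ₗ S.D j)) ?_ ?_ x
  · simpa [sub_eq_zero] using h
  · simp [S.D_one, S.R_one]
  · intro l y hy
    have hy' : S.D j (S.R i y) = S.R i (S.D j y) := by simpa [sub_eq_zero] using hy
    simp only [LinearMap.mem_ker, LinearMap.sub_apply, LinearMap.comp_apply, sub_eq_zero]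
    rw [S.R_th_mul, map_add, S.D_th_mul, S.D_th_mul, map_add, map_smul, S.R_th_mul, hy']
    by_cases h : i = l
    · subst h
      simp only [if_true, S.D_k, smul_add, hs i j]
      split_ifs <;> simp <;> abel
    · simp only [if_neg h, map_zero, add_zero]
      split_ifs <;> simp

/-- The q-adjoint action. -/
def F (i : Fin r) : A →ₗ[K] A :=
  LinearMap.mulLeft K (S.th i) - LinearMap.mulRight K (S.th i) ∘ₗ S.k i

theorem F_apply (i : Fin r) (x : A) : S.F i x = S.th i * x - S.k i x * S.th i := rfl

theorem F_mul (i : Fin r) (x y : A) : S.F i (x * y) = S.F i x * y + S.k i x * S.F i y := by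
  simp only [F_apply, S.k_mul]; noncomm_ring

theorem k_F (i l : Fin r) (x : A) : S.k l (S.F i x) = qq ^ (-p l i) • S.F i (S.k l x) := by
  simp only [F_apply, map_sub, S.k_mul, S.k_th, S.k_k l i]
  simp [smul_sub]

theorem D_F (i : Fin r) (x : A) :
    S.D i (S.F i x) = x - S.k i (S.k i x) + qq ^ (-p i i) • S.F i (S.D i x) := by
  simp only [F_apply, map_sub, S.D_mul, S.k_th, S.D_th, S.D_k, if_true]
  simp [smul_sub]; abel

theorem D_F' (i j : Fin r) (h : j ≠ i) (hs : p i j = p j i) (x : A) :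
    S.D j (S.F i x) = qq ^ (-p i j) • S.F i (S.D j x) := by
  simp only [F_apply, map_sub, S.D_mul, S.k_th, S.D_th, S.D_k, if_neg h, hs]
  simp [smul_sub]

theorem R_F (i : Fin r) (x : A) (hx : S.R i x = 0) : S.R i (S.F i x) = 0 := by
  simp only [F_apply, map_sub, S.R_mul, S.k_th, S.R_th, S.R_k', if_true, hx]
  simp

theorem R_F' (i j : Fin r) (h : j ≠ i) (x : A) :
    S.R j (S.F i x) = S.th i * S.R j x
      - (qq ^ (-p i j) * qq ^ (-p j i)) • (S.k i (S.R j x) * S.th i) := by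
  simp only [F_apply, map_sub, S.R_mul, S.k_th, S.R_th, S.R_k', if_neg h]
  simp [smul_smul, mul_comm]

theorem k_Fpow (i l : Fin r) (n : ℕ) (x : A) :
    S.k l ((S.F i ^ n) x) = (qq ^ (-p l i)) ^ n • (S.F i ^ n) (S.k l x) := by
  induction n generalizing x with
  | zero => simp
  | succ n ih =>
    rw [pow_succ, Module.End.mul_apply, ih, k_F, map_smul, smul_smul, pow_succ, Module.End.mul_apply]

theorem D_Fpow (i : Fin r) (x : A) (b : K) (hD : S.D i x = 0) (hk : S.k i x = b • x) (n : ℕ) :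
    (1 - qq ^ (-p i i)) • S.D i ((S.F i ^ (n + 1)) x) =
      ((1 - (qq ^ (-p i i)) ^ (n + 1)) * (1 - b ^ 2 * (qq ^ (-p i i)) ^ n)) • (S.F i ^ n) x := by
  generalize ha : qq ^ (-p i i) = a
  have e : ∀ m, S.D i ((S.F i ^ (m + 1)) x) = (1 - b ^ 2 * a ^ (2 * m)) • (S.F i ^ m) x
      + a • S.F i (S.D i ((S.F i ^ m) x)) := by
    intro m
    rw [pow_succ', Module.End.mul_apply, D_F, k_Fpow, hk, ha, map_smul, map_smul, map_smul, k_Fpow,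
      hk, ha, map_smul]
    simp only [smul_smul, sub_smul, one_smul]
    congr 3
    ring
  induction n with
  | zero =>
    rw [e]; simp [hD, smul_smul]
  | succ n ih =>
    rw [e, smul_add, smul_comm _ a, ← map_smul (S.F i), ih, map_smul, smul_smul, smul_smul]
    rw [← Module.End.mul_apply, ← pow_succ', ← add_smul]
    congr 1
    ring

theorem Fpow_mul (i : Fin r) : ∀ (N a b : ℕ) (x y : A), a + b = N → (S.F i ^ a) x = 0 →
    (S.F i ^ b) y = 0 → (S.F i ^ N) (x * y) = 0 := by
  intro N
  induction N with
  | zero =>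
    intro a b x y h hx hy
    obtain ⟨rfl, rfl⟩ : a = 0 ∧ b = 0 := by omega
    have : x = 0 := by simpa using hx
    simp [this]
  | succ N ih =>
    intro a b x y h hx hy
    rcases a with _ | a
    · have : x = 0 := by simpa using hx
      simp [this]
    rcases b with _ | b
    · have : y = 0 := by simpa using hy
      simp [this]
    rw [pow_succ, Module.End.mul_apply, F_mul, map_add]
    rw [ih a (b + 1) _ _ (by omega) (by rw [← Module.End.mul_apply, ← pow_succ]; exact hx) hy]
    rw [ih (a + 1) b _ _ (by omega) ?_ (by rw [← Module.End.mul_apply, ← pow_succ]; exact hy)]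
    · simp
    · have h1 := S.k_Fpow i i (a + 1) x
      rw [hx, map_zero] at h1
      have h2 : (qq ^ (-p i i)) ^ (a + 1) ≠ 0 := pow_ne_zero _ (zpow_ne_zero _ qq_ne_zero)
      exact (smul_eq_zero.mp h1.symm).resolve_left h2

/-- Elements killed by `R i` on which `F i` is nilpotent. -/
def B (i : Fin r) : Submodule K A where
  carrier := {b | S.R i b = 0 ∧ ∃ N, (S.F i ^ N) b = 0}
  zero_mem' := ⟨by simp, 0, by simp⟩
  add_mem' := by
    rintro x y ⟨hx, N, hN⟩ ⟨hy, M, hM⟩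
    refine ⟨by simp [hx, hy], N + M, ?_⟩
    have h1 : (S.F i ^ (N + M)) x = 0 := by
      rw [add_comm, pow_add, Module.End.mul_apply, hN, map_zero]
    have h2 : (S.F i ^ (N + M)) y = 0 := by
      rw [pow_add, Module.End.mul_apply, hM, map_zero]
    rw [map_add, h1, h2, add_zero]
  smul_mem' := by
    rintro c x ⟨hx, N, hN⟩
    exact ⟨by simp [hx], N, by simp [hN]⟩

theorem F_mem_B (i : Fin r) (b : A) (hb : b ∈ S.B i) : S.F i b ∈ S.B i := by
  obtain ⟨h, N, hN⟩ := hb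
  refine ⟨S.R_F i b h, N, ?_⟩
  rw [← Module.End.mul_apply, ← pow_succ, pow_succ', Module.End.mul_apply, hN, map_zero]

theorem k_mem_B (i : Fin r) (b : A) (hb : b ∈ S.B i) : S.k i b ∈ S.B i := by
  obtain ⟨h, N, hN⟩ := hb
  refine ⟨by rw [R_k', h]; simp, N, ?_⟩
  have h1 := S.k_Fpow i i N b
  rw [hN, map_zero] at h1
  exact (smul_eq_zero.mp h1.symm).resolve_left (pow_ne_zero _ (zpow_ne_zero _ qq_ne_zero))

/-- `Σ_{n < N} B θ_i^n`. -/
def T (i : Fin r) (N : ℕ) : Submodule K A :=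
  ⨆ n ∈ Finset.range N, (S.B i).map (LinearMap.mulRight K (S.th i ^ n))

theorem mem_T (i : Fin r) {n N : ℕ} (h : n < N) {b : A} (hb : b ∈ S.B i) :
    b * S.th i ^ n ∈ S.T i N := by
  refine Submodule.mem_iSup_of_mem n (Submodule.mem_iSup_of_mem (by simpa using h) ?_)
  exact ⟨b, hb, rfl⟩

theorem T_le (i : Fin r) (N : ℕ) (P : Submodule K A)
    (h : ∀ n < N, ∀ b ∈ S.B i, b * S.th i ^ n ∈ P) : S.T i N ≤ P := by
  refine iSup_le fun n => iSup_le fun hn => ?_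
  rintro _ ⟨b, hb, rfl⟩
  exact h n (by simpa using hn) b hb

theorem T_mono (i : Fin r) {N M : ℕ} (h : N ≤ M) : S.T i N ≤ S.T i M :=
  S.T_le i N _ fun _ hn _ hb => S.mem_T i (by omega) hb

theorem exists_T (i : Fin r) (hS : ∀ j, j ≠ i → ∃ N, (S.F i ^ N) (S.th j) = 0) (x : A) :
    ∃ N, x ∈ S.T i N := by
  let P : Submodule K A :=
    { carrier := {x | ∃ N, x ∈ S.T i N}
      zero_mem' := ⟨0, zero_mem _⟩
      add_mem' := by
        rintro x y ⟨N, hN⟩ ⟨M, hM⟩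
        exact ⟨max N M, add_mem (S.T_mono i (le_max_left _ _) hN) (S.T_mono i (le_max_right _ _) hM)⟩
      smul_mem' := by
        rintro c x ⟨N, hN⟩
        exact ⟨N, Submodule.smul_mem _ _ hN⟩ }
  refine S.ind P ⟨1, ?_⟩ ?_ x
  · have h1 : (1 : A) ∈ S.B i := ⟨S.R_one i, 1, by simp [F_apply, S.k_one]⟩
    simpa using S.mem_T i (n := 0) (N := 1) (by omega) h1
  · rintro j y ⟨N, hN⟩
    refine ⟨N + 1, ?_⟩
    have h2 := S.T_le i N ((S.T i (N + 1)).comap (LinearMap.mulLeft K (S.th j))) ?_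
    · exact h2 hN
    · intro n hn b hb
      simp only [Submodule.mem_comap, LinearMap.mulLeft_apply]
      by_cases hj : j = i
      · subst hj
        have e : S.th j * (b * S.th j ^ n) = S.F j b * S.th j ^ n + S.k j b * S.th j ^ (n + 1) := by
          rw [F_apply, pow_succ']; noncomm_ring
        rw [e]
        exact add_mem (S.mem_T j (by omega) (S.F_mem_B j b hb))
          (S.mem_T j (by omega) (S.k_mem_B j b hb))
      · rw [← mul_assoc]
        refine S.mem_T i (by omega) ⟨?_, ?_⟩
        · rw [R_th_mul, hb.1, if_neg (Ne.symm hj)]; simp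
        · obtain ⟨M, hM⟩ := hb.2
          obtain ⟨M', hM'⟩ := hS j hj
          exact ⟨M' + M, S.Fpow_mul i _ _ _ _ _ rfl hM' hM⟩

theorem R_thpow (i : Fin r) (n : ℕ) : (1 - qq ^ (-p i i)) • S.R i (S.th i ^ (n + 1)) =
    (1 - (qq ^ (-p i i)) ^ (n + 1)) • S.th i ^ n := by
  have kp : ∀ n, S.k i (S.th i ^ n) = (qq ^ (-p i i)) ^ n • S.th i ^ n := by
    intro n
    induction n with
    | zero => simp [S.k_one]
    | succ n ih => rw [pow_succ', k_th_mul, ih, pow_succ']; simp [smul_smul]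
  induction n with
  | zero => simp [S.R_th]
  | succ n ih =>
    rw [pow_succ', R_th_mul, if_pos rfl, kp, smul_add, ← mul_smul_comm, ih, mul_smul_comm,
      ← pow_succ', smul_smul, ← add_smul]
    congr 1
    ring

/-- If `R i u = 0`, then `u ∈ B i`. -/
theorem mem_B (i : Fin r) (hp : 0 < p i i) (N : ℕ) (u : A) (hu : u ∈ S.T i (N + 1))
    (h : S.R i u = 0) : u ∈ S.B i := by
  have q0 : ∀ n : ℕ, (1 - (qq ^ (-p i i)) ^ (n + 1)) ≠ 0 := by
    intro n
    rw [← zpow_natCast, ← zpow_mul, sub_ne_zero]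
    refine (qq_zpow_ne_one ?_).symm
    have : (0 : ℤ) < p i i * ((n + 1 : ℕ) : ℤ) := by positivity
    rw [neg_mul]; omega
  have q1 : (1 - (qq ^ (-p i i))) ≠ 0 := by simpa using q0 0
  -- decompose the top term
  have dec : ∀ N, ∀ x ∈ S.T i (N + 1), ∃ b ∈ S.B i, ∃ y ∈ S.T i N, x = y + b * S.th i ^ N := by
    intro N x hx
    let P : Submodule K A := S.T i N ⊔ (S.B i).map (LinearMap.mulRight K (S.th i ^ N))
    have hP : S.T i (N + 1) ≤ P := by
      refine S.T_le i _ _ fun n hn b hb => ?_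
      rcases Nat.lt_succ_iff_lt_or_eq.mp hn with h | rfl
      · exact Submodule.mem_sup_left (S.mem_T i h hb)
      · exact Submodule.mem_sup_right ⟨b, hb, rfl⟩
    obtain ⟨y, hy, z, ⟨b, hb, rfl⟩, rfl⟩ := Submodule.mem_sup.mp (hP hx)
    exact ⟨b, hb, y, hy, rfl⟩
  have Rb : ∀ n b, b ∈ S.B i → S.R i (b * S.th i ^ (n + 1)) =
      ((1 - qq ^ (-p i i))⁻¹ * (1 - (qq ^ (-p i i)) ^ (n + 1))) • (b * S.th i ^ n) := by
    intro n b hb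
    rw [S.R_mul, hb.1, zero_mul, add_zero, ← mul_smul_comm, mul_smul, ← R_thpow, smul_smul,
      inv_mul_cancel₀ q1, one_smul]
  have RT : ∀ N, ∀ x ∈ S.T i (N + 1), S.R i x ∈ S.T i N := by
    intro N x hx
    refine S.T_le i (N + 1) ((S.T i N).comap (S.R i)) ?_ hx
    intro n hn b hb
    rw [Submodule.mem_comap]
    rcases n with _ | n
    · simp [hb.1]
    · rw [Rb n b hb]
      exact Submodule.smul_mem _ _ (S.mem_T i (by omega) hb)
  have T0 : ∀ x ∈ S.T i 0, x = 0 := by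
    intro x hx
    have := S.T_le i 0 ⊥ (by intro n hn; omega) hx
    simpa using this
  have Rpow : ∀ N, ∀ x ∈ S.T i N, (S.R i ^ N) x = 0 := by
    intro N
    induction N with
    | zero => intro x hx; simpa using T0 x hx
    | succ N ih =>
      intro x hx
      rw [pow_succ, Module.End.mul_apply]
      exact ih _ (RT N x hx)
  have Rtop : ∀ N b, b ∈ S.B i → ∃ c : K, c ≠ 0 ∧ (S.R i ^ N) (b * S.th i ^ N) = c • b := by
    intro N b hb
    induction N with
    | zero => exact ⟨1, one_ne_zero, by simp⟩
    | succ N ih =>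
      obtain ⟨c, hc, e⟩ := ih
      refine ⟨_, mul_ne_zero (mul_ne_zero (inv_ne_zero q1) (q0 N)) hc, ?_⟩
      rw [pow_succ, Module.End.mul_apply, Rb N b hb, map_smul, e, smul_smul]
  induction N generalizing u with
  | zero =>
    obtain ⟨b, hb, y, hy, rfl⟩ := dec 0 u hu
    rw [T0 y hy]; simpa using hb
  | succ N ih =>
    obtain ⟨b, hb, y, hy, rfl⟩ := dec (N + 1) u hu
    have h1 : (S.R i ^ (N + 1)) (y + b * S.th i ^ (N + 1)) = 0 := by
      rw [pow_succ, Module.End.mul_apply, h, map_zero]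
    obtain ⟨c, hc, e⟩ := Rtop (N + 1) b hb
    rw [map_add, Rpow _ _ hy, zero_add, e] at h1
    have hb0 : b = 0 := (smul_eq_zero.mp h1).resolve_left hc
    subst hb0
    rw [zero_mul, add_zero] at h ⊢
    exact ih y hy h

/-- Key positivity: a primitive weight vector has antidominant degree. -/
theorem primitive (i : Fin r) (hp : 0 < p i i)
    (hS : ∀ j, j ≠ i → ∃ N, (S.F i ^ N) (S.th j) = 0) (u : A) (hD : S.D i u = 0)
    (hR : S.R i u = 0) (m : ℤ) (hm : 0 < m) (hk : S.k i u = qq ^ (-m) • u) : u = 0 := by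
  obtain ⟨N, hN⟩ := S.exists_T i hS u
  obtain ⟨-, M, hM⟩ := S.mem_B i hp N u (S.T_mono i (Nat.le_succ N) hN) hR
  induction M with
  | zero => simpa using hM
  | succ n ih =>
    refine ih ?_
    have h := S.D_Fpow i u _ hD hk n
    rw [hM, map_zero, smul_zero] at h
    refine (smul_eq_zero.mp h.symm).resolve_left (mul_ne_zero ?_ ?_)
    · rw [← zpow_natCast, ← zpow_mul, sub_ne_zero]
      refine (qq_zpow_ne_one ?_).symm
      have : (0 : ℤ) < p i i * ((n + 1 : ℕ) : ℤ) := by positivity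
      rw [neg_mul]; omega
    · rw [← zpow_natCast, ← zpow_natCast, ← zpow_mul, ← zpow_mul, zmul, sub_ne_zero]
      refine (qq_zpow_ne_one ?_).symm
      have : (0 : ℤ) ≤ p i i * (n : ℤ) := by positivity
      push_cast
      rw [neg_mul, neg_mul]; omega

end SkewData

/-! ### q-binomials and the Serre element as an iterated q-commutator -/

theorem qInt_rec (d : ℤ) (hd : 0 < d) (n k : ℤ) :
    qInt d (n + 1) = qq ^ (d * (n - k)) * qInt d (k + 1) + qq ^ (-(d * (k + 1))) * qInt d (n - k) := by
  have h : qq ^ d - qq ^ (-d) ≠ 0 := by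
    rw [sub_ne_zero]
    intro h
    have h1 : qq ^ (d + d) = 1 := by
      rw [zpow_add₀ qq_ne_zero]; nth_rw 1 [h]; rw [← zpow_add₀ qq_ne_zero]; simp
    exact qq_zpow_ne_one (by omega) h1
  unfold qInt
  rw [mul_div_assoc', mul_div_assoc', ← add_div]
  congr 1
  rw [show d * (n + 1) = d * (n - k) + d * (k + 1) by ring, zpow_neg, zpow_neg, zpow_neg,
    zpow_add₀ qq_ne_zero, mul_inv]
  ring

theorem qInt_ne_zero (d : ℤ) (hd : 0 < d) (n : ℤ) (hn : 0 < n) : qInt d n ≠ 0 := by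
  have h : ∀ e : ℤ, 0 < e → qq ^ e - qq ^ (-e) ≠ 0 := by
    intro e he
    rw [sub_ne_zero]
    intro h
    have h1 : qq ^ (e + e) = 1 := by
      rw [zpow_add₀ qq_ne_zero]; nth_rw 1 [h]; rw [← zpow_add₀ qq_ne_zero]; simp
    exact qq_zpow_ne_one (by omega) h1
  exact div_ne_zero (h _ (by positivity)) (h _ hd)

theorem qBinom_zero (d : ℤ) (n : ℕ) : qBinom d n 0 = 1 := by simp [qBinom]

theorem qBinom_top (d : ℤ) (n : ℕ) : qBinom d n (n + 1) = 0 := by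
  unfold qBinom
  rw [Finset.prod_range_succ]
  simp [qInt]

theorem qBinom_pascal (d : ℤ) (hd : 0 < d) (n k : ℕ) :
    qBinom d (n + 1) (k + 1) = qq ^ (d * ((n : ℤ) - k)) * qBinom d n k
      + qq ^ (-(d * ((k : ℤ) + 1))) * qBinom d n (k + 1) := by
  have hk : ∏ t ∈ Finset.range k, qInt d ((t : ℤ) + 1) ≠ 0 :=
    Finset.prod_ne_zero_iff.mpr fun t _ => qInt_ne_zero d hd _ (by positivity)
  have hk1 : qInt d ((k : ℤ) + 1) ≠ 0 := qInt_ne_zero d hd _ (by positivity)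
  unfold qBinom
  rw [Finset.prod_range_succ' (fun t : ℕ => qInt d (((n + 1 : ℕ) : ℤ) - t)),
    Finset.prod_range_succ (fun t : ℕ => qInt d ((t : ℤ) + 1)),
    Finset.prod_range_succ (fun t : ℕ => qInt d ((n : ℤ) - t))]
  have e : ∀ t : ℕ, (((n + 1 : ℕ) : ℤ) - ((t + 1 : ℕ) : ℤ)) = (n : ℤ) - t := by
    intro t; push_cast; ring
  simp only [e]
  have e2 : (((n + 1 : ℕ) : ℤ) - ((0 : ℕ) : ℤ)) = (n : ℤ) + 1 := by push_cast; ring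
  rw [e2, qInt_rec d hd n k]
  field_simp

/-- Coefficients of the iterated q-commutator. -/
def serC (d s : ℤ) (n k : ℕ) : K :=
  (-1) ^ (n + k) * qq ^ (((n : ℤ) - k) * (-s - d * ((n : ℤ) - 1))) * qBinom d n k

theorem serC_rec (d s : ℤ) (hd : 0 < d) (n k : ℕ) :
    serC d s (n + 1) (k + 1) = serC d s n k
      - (qq ^ (-s) * (qq ^ (-(2 * d))) ^ n) * serC d s n (k + 1) := by
  unfold serC
  rw [qBinom_pascal d hd, ← zpow_natCast (qq ^ (-(2 * d))), ← zpow_mul, ← zpow_add₀ qq_ne_zero]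
  have e1 : (-1 : K) ^ (n + 1 + (k + 1)) = (-1) ^ (n + k) := by
    rw [show n + 1 + (k + 1) = n + k + 2 by ring, pow_add]; simp
  have e2 : (-1 : K) ^ (n + (k + 1)) = -(-1) ^ (n + k) := by
    rw [← add_assoc, pow_succ]; simp
  rw [e1, e2]
  have e3 : ∀ a b c : ℤ, a = b + c → qq ^ a = qq ^ b * qq ^ c := by
    intro a b c h; rw [h, zpow_add₀ qq_ne_zero]
  have e4 : qq ^ (((n : ℤ) - k) * (-s - d * ((n : ℤ) - 1)))
      = qq ^ ((((n + 1 : ℕ) : ℤ) - ((k + 1 : ℕ) : ℤ)) * (-s - d * (((n + 1 : ℕ) : ℤ) - 1)))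
        * qq ^ (d * ((n : ℤ) - k)) := by
    apply e3; push_cast; ring
  have e5 : qq ^ (-s + -(2 * d) * (n : ℤ)) * qq ^ (((n : ℤ) - ((k + 1 : ℕ) : ℤ)) * (-s - d * ((n : ℤ) - 1)))
      = qq ^ ((((n + 1 : ℕ) : ℤ) - ((k + 1 : ℕ) : ℤ)) * (-s - d * (((n + 1 : ℕ) : ℤ) - 1)))
        * qq ^ (-(d * ((k : ℤ) + 1))) := by
    rw [← zpow_add₀ qq_ne_zero, ← zpow_add₀ qq_ne_zero]
    congr 1; push_cast; ring
  rw [e4]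
  linear_combination (- (-1) ^ (n + k) * qBinom d n (k + 1)) * e5

theorem serC_zero (d s : ℤ) (n : ℕ) :
    serC d s (n + 1) 0 = - (qq ^ (-s) * (qq ^ (-(2 * d))) ^ n) * serC d s n 0 := by
  unfold serC
  rw [qBinom_zero, qBinom_zero, ← zpow_natCast (qq ^ (-(2 * d))), ← zpow_mul, ← zpow_add₀ qq_ne_zero]
  have e5 : qq ^ (-s + -(2 * d) * (n : ℤ)) * qq ^ (((n : ℤ) - ((0 : ℕ) : ℤ)) * (-s - d * ((n : ℤ) - 1)))
      = qq ^ ((((n + 1 : ℕ) : ℤ) - ((0 : ℕ) : ℤ)) * (-s - d * (((n + 1 : ℕ) : ℤ) - 1))) := by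
    rw [← zpow_add₀ qq_ne_zero]
    congr 1; push_cast; ring
  rw [← e5]
  ring

theorem serC_top (d s : ℤ) (n : ℕ) : serC d s n (n + 1) = 0 := by
  unfold serC; rw [qBinom_top, mul_zero]

namespace SkewData

variable {p : Fin r → Fin r → ℤ} {A : Type} [Ring A] [Algebra K A] (S : SkewData p A)

theorem k_thpow (i l : Fin r) (n : ℕ) : S.k l (S.th i ^ n) = (qq ^ (-p l i)) ^ n • S.th i ^ n := by
  induction n with
  | zero => simp [S.k_one]
  | succ n ih => rw [pow_succ', k_th_mul, ih, pow_succ']; simp [smul_smul]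

theorem F_mono (i j : Fin r) (n k : ℕ) (hk : k ≤ n) :
    S.F i (S.th i ^ k * S.th j * S.th i ^ (n - k)) =
      S.th i ^ (k + 1) * S.th j * S.th i ^ (n - k)
      - (qq ^ (-p i j) * (qq ^ (-p i i)) ^ n) • (S.th i ^ k * S.th j * S.th i ^ (n + 1 - k)) := by
  rw [F_apply, S.k_mul, S.k_mul, k_thpow, k_thpow, S.k_th]
  simp only [smul_mul_assoc, mul_smul_comm, mul_assoc, ← pow_succ, smul_smul]
  rw [show n + 1 - k = n - k + 1 by omega, pow_succ' _ k, mul_assoc]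
  congr 2
  rw [mul_left_comm, ← pow_add, Nat.sub_add_cancel hk]

theorem Fpow_expand (i j : Fin r) (d : ℤ) (hd : 0 < d) (hp : p i i = 2 * d) (n : ℕ) :
    (S.F i ^ n) (S.th j) = ∑ k ∈ Finset.range (n + 1),
      serC d (p i j) n k • (S.th i ^ k * S.th j * S.th i ^ (n - k)) := by
  induction n with
  | zero => simp [serC, qBinom_zero]
  | succ n ih =>
    rw [pow_succ', Module.End.mul_apply, ih, map_sum]
    have e1 : ∀ k ∈ Finset.range (n + 1),
        S.F i (serC d (p i j) n k • (S.th i ^ k * S.th j * S.th i ^ (n - k))) =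
        serC d (p i j) n k • (S.th i ^ (k + 1) * S.th j * S.th i ^ (n + 1 - (k + 1)))
        - ((qq ^ (-p i j) * (qq ^ (-(2 * d))) ^ n) * serC d (p i j) n k) •
          (S.th i ^ k * S.th j * S.th i ^ (n + 1 - k)) := by
      intro k hk
      rw [map_smul, F_mono _ _ _ _ _ (by simpa [Nat.lt_succ_iff] using hk), smul_sub, smul_smul,
        hp, mul_comm (serC _ _ _ _), Nat.add_sub_add_right]
    rw [Finset.sum_congr rfl e1, Finset.sum_sub_distrib]
    have e2 : ∑ k ∈ Finset.range (n + 1), ((qq ^ (-p i j) * (qq ^ (-(2 * d))) ^ n) * serC d (p i j) n k) •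
          (S.th i ^ k * S.th j * S.th i ^ (n + 1 - k)) =
        ∑ k ∈ Finset.range (n + 2), ((qq ^ (-p i j) * (qq ^ (-(2 * d))) ^ n) * serC d (p i j) n k) •
          (S.th i ^ k * S.th j * S.th i ^ (n + 1 - k)) := by
      rw [Finset.sum_range_succ _ (n + 1), serC_top]; simp
    rw [e2, Finset.sum_range_succ' _ (n + 1), Finset.sum_range_succ' _ (n + 1), ← sub_sub,
      ← Finset.sum_sub_distrib, serC_zero, neg_mul, neg_smul, sub_eq_add_neg]
    congr 1
    refine Finset.sum_congr rfl fun k _ => ?_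
    rw [serC_rec d _ hd, sub_smul]

theorem D_serre (hs : ∀ a b, p a b = p b a) (i j l : Fin r) (hij : i ≠ j) (hp : 0 < p i i) (n : ℕ)
    (hn : p i i * n + 2 * p i j = 0) : S.D l ((S.F i ^ (n + 1)) (S.th j)) = 0 := by
  by_cases hl : l = i
  · subst hl
    have h := S.D_Fpow l (S.th j) (qq ^ (-p l j)) (by rw [S.D_th, if_neg hij]) (S.k_th _ _) n
    have e : (qq ^ (-p l j)) ^ 2 * (qq ^ (-p l l)) ^ n = 1 := by
      rw [← zpow_natCast, ← zpow_natCast, ← zpow_mul, ← zpow_mul, zmul]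
      have : -p l j * ((2 : ℕ) : ℤ) + -p l l * (n : ℤ) = 0 := by push_cast; linarith
      rw [this, zpow_zero]
    rw [e, sub_self, mul_zero, zero_smul] at h
    refine (smul_eq_zero.mp h).resolve_left ?_
    exact sub_ne_zero.mpr (qq_zpow_ne_one (by omega)).symm
  · have e : ∀ m x, S.D l ((S.F i ^ m) x) = (qq ^ (-p i l)) ^ m • (S.F i ^ m) (S.D l x) := by
      intro m x
      induction m generalizing x with
      | zero => simp
      | succ m ih =>
        rw [pow_succ, Module.End.mul_apply, ih, D_F' _ _ _ hl (hs _ _), map_smul, smul_smul,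
          ← pow_succ, ← Module.End.mul_apply, ← pow_succ]
    rw [e, S.D_th]
    split_ifs
    · rw [pow_succ (S.F i), Module.End.mul_apply, F_apply, S.k_one]; simp
    · simp

theorem R_serre (hs : ∀ a b, p a b = p b a) (i j l : Fin r) (hij : i ≠ j) (n : ℕ)
    (hn : p i i * n + 2 * p i j = 0) : S.R l ((S.F i ^ (n + 1)) (S.th j)) = 0 := by
  by_cases hl : l = i
  · subst hl
    have e : ∀ m, S.R l ((S.F l ^ m) (S.th j)) = 0 := by
      intro m
      induction m with
      | zero => simp [S.R_th, hij]
      | succ m ih => rw [pow_succ', Module.End.mul_apply]; exact S.R_F _ _ ih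
    exact e _
  by_cases hj : l = j
  · subst hj
    have st : ∀ (m : ℕ) x (c : K), S.R l x = c • S.th i ^ m →
        S.R l (S.F i x) = (c * (1 - qq ^ (-(p i i * m + 2 * p i l)))) • S.th i ^ (m + 1) := by
      intro m x c h
      rw [R_F' _ _ _ hl, h, map_smul, k_thpow, smul_mul_assoc, smul_mul_assoc, ← pow_succ,
        mul_smul_comm, ← pow_succ', smul_smul, smul_smul, ← sub_smul]
      congr 1
      rw [hs l i, ← zpow_natCast, ← zpow_mul, zmul, mul_comm _ c, mul_assoc, zmul, mul_one_sub]
      congr 3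
      ring
    have e : ∀ m, ∃ c : K, S.R l ((S.F i ^ m) (S.th l)) = c • S.th i ^ m := by
      intro m
      induction m with
      | zero => exact ⟨1, by simp [S.R_th]⟩
      | succ m ih =>
        obtain ⟨c, hc⟩ := ih
        exact ⟨_, by rw [pow_succ', Module.End.mul_apply]; exact st _ _ _ hc⟩
    obtain ⟨c, hc⟩ := e n
    rw [pow_succ', Module.End.mul_apply, st _ _ _ hc, hn]
    simp
  · have e : ∀ m, S.R l ((S.F i ^ m) (S.th j)) = 0 := by
      intro m
      induction m with
      | zero => simp [S.R_th, hj]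
      | succ m ih => rw [pow_succ', Module.End.mul_apply, R_F' _ _ _ hl, ih]; simp
    exact e _

end SkewData

/-! ### Quotients -/

/-- The two-sided ideal attached to a bi-stable submodule. -/
def idealOf {A : Type} [Ring A] [Algebra K A] (J : Submodule K A) (hl : ∀ x, ∀ y ∈ J, x * y ∈ J)
    (hr : ∀ x ∈ J, ∀ y, x * y ∈ J) : TwoSidedIdeal A :=
  TwoSidedIdeal.mk' (J : Set A) J.zero_mem (fun h h' => J.add_mem h h') (fun h => J.neg_mem h)
    (fun h => hl _ _ h) (fun h => hr _ h _)

theorem exists_quot {p : Fin r → Fin r → ℤ} {A : Type} [Ring A] [Algebra K A] (S : SkewData p A)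
    (J : Submodule K A) (hl : ∀ x, ∀ y ∈ J, x * y ∈ J)
    (hr : ∀ x ∈ J, ∀ y, x * y ∈ J) (hk : ∀ i, ∀ x ∈ J, S.k i x ∈ J)
    (hD : ∀ i, ∀ x ∈ J, S.D i x ∈ J) (hR : ∀ i, ∀ x ∈ J, S.R i x ∈ J) :
    ∃ (B : Type) (_ : Ring B) (_ : Algebra K B) (T : SkewData p B) (π : A →ₐ[K] B),
      (∀ x, π x = 0 ↔ x ∈ J) ∧ (∀ i, T.th i = π (S.th i)) ∧
      (∀ i x, T.k i (π x) = π (S.k i x)) ∧ (∀ i x, T.D i (π x) = π (S.D i x)) ∧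
      (∀ i x, T.R i (π x) = π (S.R i x)) := by
  let I := idealOf J hl hr
  let B := I.ringCon.Quotient
  let π : A →ₐ[K] B :=
    { I.ringCon.mk' with
      commutes' := fun c => rfl }
  have hπ : ∀ x, π x = 0 ↔ x ∈ J := by
    intro x
    have h1 : I.ringCon.mk' x = 0 ↔ x ∈ I := by
      rw [← TwoSidedIdeal.mem_ker, TwoSidedIdeal.ker_ringCon_mk']
    refine Iff.trans h1 ?_
    exact TwoSidedIdeal.mem_mk' _ _ _ _ _ _ _
  have hs : Function.Surjective π := I.ringCon.mk'_surjective
  obtain ⟨s, hs'⟩ := π.toLinearMap.exists_rightInverse_of_surjective (LinearMap.range_eq_top.mpr hs)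
  have hsx : ∀ x, s (π x) - x ∈ J := by
    intro x
    rw [← hπ, map_sub]
    have := LinearMap.congr_fun hs' (π x)
    simp at this
    rw [this, sub_self]
  have desc : ∀ (f : A →ₗ[K] A), (∀ x ∈ J, f x ∈ J) → ∀ x, π (f (s (π x))) = π (f x) := by
    intro f hf x
    rw [← sub_eq_zero, ← map_sub, ← map_sub, hπ]
    exact hf _ (hsx x)
  refine ⟨B, inferInstance, inferInstance,
    { th := fun i => π (S.th i)
      k := fun i => π.toLinearMap ∘ₗ S.k i ∘ₗ s
      D := fun i => π.toLinearMap ∘ₗ S.D i ∘ₗ s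
      R := fun i => π.toLinearMap ∘ₗ S.R i ∘ₗ s
      k_one := ?_, k_mul := ?_, k_th := ?_, D_th := ?_, R_th := ?_, D_mul := ?_, R_mul := ?_,
      ind := ?_ }, π, hπ, fun i => rfl,
      fun i => desc _ (hk i), fun i => desc _ (hD i), fun i => desc _ (hR i)⟩
  · intro i
    rw [← map_one π]
    exact (desc _ (hk i) 1).trans (by rw [S.k_one])
  · intro i x y
    obtain ⟨x, rfl⟩ := hs x
    obtain ⟨y, rfl⟩ := hs y
    rw [← map_mul]
    refine (desc _ (hk i) _).trans ?_
    rw [S.k_mul, map_mul]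
    exact congrArg₂ _ (desc _ (hk i) _).symm (desc _ (hk i) _).symm
  · intro i j
    refine (desc _ (hk i) _).trans ?_
    rw [S.k_th, map_smul]
  · intro i j
    refine (desc _ (hD i) _).trans ?_
    rw [S.D_th]; split_ifs <;> simp
  · intro i j
    refine (desc _ (hR i) _).trans ?_
    rw [S.R_th]; split_ifs <;> simp
  · intro i x y
    obtain ⟨x, rfl⟩ := hs x
    obtain ⟨y, rfl⟩ := hs y
    rw [← map_mul]
    refine (desc _ (hD i) _).trans ?_
    rw [S.D_mul, map_add, map_mul, map_mul]
    refine congrArg₂ _ (congrArg₂ _ (desc _ (hD i) _).symm rfl)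
      (congrArg₂ _ (desc _ (hk i) _).symm (desc _ (hD i) _).symm)
  · intro i x y
    obtain ⟨x, rfl⟩ := hs x
    obtain ⟨y, rfl⟩ := hs y
    rw [← map_mul]
    refine (desc _ (hR i) _).trans ?_
    rw [S.R_mul, map_add, map_mul, map_mul]
    refine congrArg₂ _ (congrArg₂ _ rfl (desc _ (hR i) _).symm)
      (congrArg₂ _ (desc _ (hR i) _).symm (desc _ (hk i) _).symm)
  · intro P h1 h2 x
    obtain ⟨x, rfl⟩ := hs x
    refine S.ind (P.comap π.toLinearMap) ?_ ?_ x
    · simpa using h1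
    · intro j y hy
      have := h2 j _ hy
      simpa using this

/-! ### The free algebra -/

abbrev Fr (r : ℕ) := FreeAlgebra K (Fin r)

theorem free_ind (P : Submodule K (Fr r)) (h1 : 1 ∈ P)
    (h2 : ∀ j, ∀ x ∈ P, FreeAlgebra.ι K j * x ∈ P) (x : Fr r) : x ∈ P := by
  have h : ∀ x : Fr r, ∀ y ∈ P, x * y ∈ P := by
    intro x
    induction x using FreeAlgebra.induction with
    | grade0 c =>
      intro y hy
      rw [← Algebra.smul_def]; exact P.smul_mem _ hy
    | grade1 j => exact h2 j
    | mul a b ha hb => intro y hy; rw [mul_assoc]; exact ha _ (hb _ hy)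
    | add a b ha hb => intro y hy; rw [add_mul]; exact P.add_mem (ha _ hy) (hb _ hy)
  simpa using h x 1 h1

/-- Upper triangular matrices encode skew derivations. -/
def triHom (f g : Fr r →ₐ[K] Fr r) (v : Fin r → Fr r) : Fr r →ₐ[K] Matrix (Fin 2) (Fin 2) (Fr r) :=
  FreeAlgebra.lift K fun j => !![f (FreeAlgebra.ι K j), v j; 0, g (FreeAlgebra.ι K j)]

theorem triHom_entries (f g : Fr r →ₐ[K] Fr r) (v : Fin r → Fr r) (x : Fr r) :
    triHom f g v x 0 0 = f x ∧ triHom f g v x 1 0 = 0 ∧ triHom f g v x 1 1 = g x := by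
  induction x using FreeAlgebra.induction with
  | grade0 c => simp [Matrix.algebraMap_matrix_apply]
  | grade1 j => simp [triHom]
  | mul a b ha hb =>
    simp [Matrix.mul_apply, Fin.sum_univ_two, ha, hb]
  | add a b ha hb => simp [ha, hb]

def skewDer (f g : Fr r →ₐ[K] Fr r) (v : Fin r → Fr r) : Fr r →ₗ[K] Fr r where
  toFun x := triHom f g v x 0 1
  map_add' x y := by simp
  map_smul' c x := by simp

theorem skewDer_ι (f g : Fr r →ₐ[K] Fr r) (v : Fin r → Fr r) (j : Fin r) :
    skewDer f g v (FreeAlgebra.ι K j) = v j := by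
  simp [skewDer, triHom]

theorem skewDer_mul (f g : Fr r →ₐ[K] Fr r) (v : Fin r → Fr r) (x y : Fr r) :
    skewDer f g v (x * y) = f x * skewDer f g v y + skewDer f g v x * g y := by
  simp [skewDer, Matrix.mul_apply, Fin.sum_univ_two, triHom_entries]

def kHom (p : Fin r → Fin r → ℤ) (i : Fin r) : Fr r →ₐ[K] Fr r :=
  FreeAlgebra.lift K fun j => qq ^ (-p i j) • FreeAlgebra.ι K j

def freeSkew (p : Fin r → Fin r → ℤ) : SkewData p (Fr r) where
  th := FreeAlgebra.ι K
  k i := (kHom p i).toLinearMap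
  D i := skewDer (kHom p i) (AlgHom.id K _) fun j => if i = j then 1 else 0
  R i := skewDer (AlgHom.id K _) (kHom p i) fun j => if i = j then 1 else 0
  k_one i := by simp
  k_mul i x y := by simp
  k_th i j := by simp [kHom]
  D_th i j := by rw [skewDer_ι]
  R_th i j := by rw [skewDer_ι]
  D_mul i x y := by rw [skewDer_mul, add_comm]; rfl
  R_mul i x y := by rw [skewDer_mul]; rfl
  ind := free_ind

/-! ### The shuffle side -/

section Shuffle

variable (p : Fin r → Fin r → ℤ)

abbrev wd (w : Word r) : FA r := Finsupp.single w 1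

theorem single_eq (w : Word r) (c : K) : (Finsupp.single w c : FA r) = c • wd w := by simp

/-- Removal of the last letter `i`. -/
def del (i : Fin r) : FA r →ₗ[K] FA r :=
  Finsupp.lcomapDomain (fun w : Word r => w ++ [i]) (fun _ _ h => List.append_cancel_right h)

theorem del_apply (i : Fin r) (f : FA r) (w : Word r) : del i f w = f (w ++ [i]) := rfl

theorem FA_ext {f g : FA r} (h0 : f [] = g []) (h : ∀ i, del i f = del i g) : f = g := by
  ext w
  rcases List.eq_nil_or_concat w with rfl | ⟨w', i, rfl⟩
  · exact h0
  · have := DFunLike.congr_fun (h i) w'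
    simpa [del_apply] using this

theorem del_nil (i : Fin r) : del i (wd []) = 0 := by
  ext w; simp [del_apply]

theorem del_snoc (i j : Fin r) (f : FA r) :
    del i (Finsupp.mapDomain (fun u => u ++ [j]) f) = if i = j then f else 0 := by
  have hinj : ∀ j : Fin r, Function.Injective (fun u : Word r => u ++ [j]) :=
    fun j _ _ h => List.append_cancel_right h
  ext w
  rw [del_apply]
  split_ifs with h
  · subst h
    exact Finsupp.mapDomain_apply (hinj i) f w
  · rw [Finsupp.mapDomain_notin_range]
    · rfl
    · rintro ⟨u, hu⟩
      have := (List.append_inj_right' hu rfl)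
      simp at this
      exact h this.symm

theorem wd_snoc (w : Word r) (j : Fin r) :
    wd (w ++ [j]) = Finsupp.mapDomain (fun u => u ++ [j]) (wd w) := by
  simp [wd, Finsupp.mapDomain_single]

theorem del_wd_snoc (i j : Fin r) (w : Word r) :
    del i (wd (w ++ [j])) = if i = j then wd w else 0 := by
  rw [wd_snoc, del_snoc]

theorem del_wd (i : Fin r) (w : Word r) :
    del i (wd w) = 0 ∨ ∃ w', w'.length < w.length ∧ del i (wd w) = wd w' := by
  rcases List.eq_nil_or_concat w with rfl | ⟨w', j, rfl⟩
  · left; exact del_nil i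
  · rw [List.concat_eq_append, del_wd_snoc]
    split_ifs
    · right; exact ⟨w', by simp, rfl⟩
    · left; rfl

/-- The weight operator on `F`. -/
def kk (i : Fin r) : FA r →ₗ[K] FA r :=
  Finsupp.linearCombination K fun w => qq ^ (-pairW p w [i]) • wd w

theorem kk_wd (i : Fin r) (w : Word r) : kk p i (wd w) = qq ^ (-pairW p w [i]) • wd w := by
  simp [kk, wd]

theorem kk_apply (i : Fin r) (f : FA r) (w : Word r) :
    kk p i f w = qq ^ (-pairW p w [i]) * f w := by
  induction f using Finsupp.induction_linear with
  | zero => simp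
  | add f g hf hg => simp [hf, hg, mul_add]
  | single x c =>
    rw [single_eq, map_smul, kk_wd]
    by_cases h : x = w
    · subst h; simp [wd, mul_comm]
    · simp [wd, h]

def shL : FA r →ₗ[K] FA r →ₗ[K] FA r :=
  Finsupp.linearCombination K fun w => Finsupp.linearCombination K fun x =>
    shAux p w.reverse x.reverse

theorem shL_wd (w x : Word r) : shL p (wd w) (wd x) = shAux p w.reverse x.reverse := by
  simp [shL, wd]

theorem shuffle_eq (f g : FA r) : shuffle p f g = shL p f g := by
  unfold shuffle shL
  rw [Finsupp.linearCombination_apply, LinearMap.finsupp_sum_apply]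
  refine Finsupp.sum_congr fun w _ => ?_
  rw [LinearMap.smul_apply, Finsupp.linearCombination_apply, Finsupp.smul_sum]
  refine Finsupp.sum_congr fun x _ => ?_
  rw [mul_smul]

theorem shAux_nil_left (x : Word r) : shAux p [] x = wd x.reverse := by
  rw [shAux]

theorem shAux_nil_right (x : Word r) : shAux p x [] = wd x.reverse := by
  cases x <;> simp [shAux]

theorem shAux_cons (a b : Fin r) (w x : Word r) : shAux p (a :: w) (b :: x) =
    Finsupp.mapDomain (fun u => u ++ [a]) (shAux p w (b :: x))
      + (qq ^ (-(pairW p (a :: w) [b]))) •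
          Finsupp.mapDomain (fun u => u ++ [b]) (shAux p (a :: w) x) := by
  rw [shAux]

theorem lin_ext {M : Type*} [AddCommGroup M] [Module K M] {f g : FA r →ₗ[K] M}
    (h : ∀ w, f (wd w) = g (wd w)) (x : FA r) : f x = g x := by
  have : f = g := Finsupp.lhom_ext fun w c => by rw [single_eq, map_smul, map_smul, h]
  rw [this]

theorem lin_ext₂ {M : Type*} [AddCommGroup M] [Module K M] {f g : FA r →ₗ[K] FA r →ₗ[K] M}
    (h : ∀ w x, f (wd w) (wd x) = g (wd w) (wd x)) (x y : FA r) : f x y = g x y := by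
  have : f x = g x := lin_ext (fun w => LinearMap.ext (lin_ext (h w))) x
  rw [this]

theorem shL_one_left (f : FA r) : shL p (wd []) f = f := by
  refine lin_ext (f := shL p (wd [])) (g := LinearMap.id) (fun w => ?_) f
  rw [shL_wd, List.reverse_nil, shAux_nil_left, List.reverse_reverse]; rfl

theorem shL_one_right (f : FA r) : shL p f (wd []) = f := by
  refine lin_ext (f := (shL p).flip (wd [])) (g := LinearMap.id) (fun w => ?_) f
  rw [LinearMap.flip_apply, shL_wd, List.reverse_nil, shAux_nil_right, List.reverse_reverse]; rfl

theorem pairW_single (w : Word r) (i : Fin r) : pairW p w [i] = (w.map fun a => p a i).sum := by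
  simp [pairW]

theorem pairW_perm {w w' : Word r} (h : w.Perm w') (i : Fin r) :
    pairW p w [i] = pairW p w' [i] := by
  rw [pairW_single, pairW_single]; exact (h.map _).sum_eq

theorem pairW_append (w x : Word r) (i : Fin r) :
    pairW p (w ++ x) [i] = pairW p w [i] + pairW p x [i] := by
  simp [pairW_single]

theorem del_shL (i : Fin r) (f g : FA r) :
    del i (shL p f g) = shL p (del i f) g + shL p (kk p i f) (del i g) := by
  refine lin_ext₂ (f := (shL p).compr₂ (del i))
    (g := (shL p) ∘ₗ (del i) + ((shL p) ∘ₗ (kk p i)).compl₂ (del i)) (fun w x => ?_) f g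
  simp only [LinearMap.compr₂_apply, LinearMap.add_apply, LinearMap.comp_apply,
    LinearMap.compl₂_apply]
  rcases List.eq_nil_or_concat w with rfl | ⟨w', a, rfl⟩
  · rw [shL_one_left, del_nil, kk_wd]
    simp [pairW_single, shL_one_left]
  rcases List.eq_nil_or_concat x with rfl | ⟨x', b, rfl⟩
  · rw [shL_one_right, del_nil]
    simp [shL_one_right]
  rw [List.concat_eq_append, List.concat_eq_append, del_wd_snoc, del_wd_snoc, kk_wd, shL_wd]
  rw [List.reverse_append, List.reverse_append, List.reverse_singleton, List.reverse_singleton,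
    List.singleton_append, List.singleton_append, shAux_cons, map_add, map_smul, del_snoc, del_snoc]
  have e1 : shAux p w'.reverse (b :: x'.reverse) = shL p (wd w') (wd (x' ++ [b])) := by
    rw [shL_wd]; simp
  have e2 : shAux p (a :: w'.reverse) x'.reverse = shL p (wd (w' ++ [a])) (wd x') := by
    rw [shL_wd]; simp
  rw [e1, e2]
  have e3 : pairW p (a :: w'.reverse) [b] = pairW p (w' ++ [a]) [b] := by
    refine pairW_perm p ?_ b
    have : a :: w'.reverse = (w' ++ [a]).reverse := by simp
    rw [this]; exact List.reverse_perm _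
  rw [e3]
  congr 1
  · split_ifs <;> simp
  · split_ifs with h
    · simp only [h, map_smul, LinearMap.smul_apply]
    · simp

theorem shL_nil (f g : FA r) : shL p f g [] = f [] * g [] := by
  refine lin_ext₂ (f := (shL p).compr₂ (Finsupp.lapply []))
    (g := (LinearMap.mul K K).compl₁₂ (Finsupp.lapply []) (Finsupp.lapply [])) (fun w x => ?_) f g
  simp only [LinearMap.compr₂_apply, LinearMap.compl₁₂_apply, Finsupp.lapply_apply,
    LinearMap.mul_apply']
  rcases List.eq_nil_or_concat w with rfl | ⟨w', a, rfl⟩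
  · rw [shL_one_left]; simp [wd]
  rcases List.eq_nil_or_concat x with rfl | ⟨x', b, rfl⟩
  · rw [shL_one_right]; simp [wd]
  rw [shL_wd]
  have hs : ∀ (c : Fin r) (f : FA r), Finsupp.mapDomain (fun u => u ++ [c]) f [] = 0 := by
    intro c f
    apply Finsupp.mapDomain_notin_range
    rintro ⟨u, hu⟩
    simp at hu
  simp [shAux_cons, hs, wd]

/-- Supports of shuffles. -/
theorem shL_supp : ∀ (n : ℕ) (w x u : Word r), w.length + x.length = n →
    shL p (wd w) (wd x) u ≠ 0 → u.Perm (w ++ x) := by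
  intro n
  induction n using Nat.strong_induction_on with
  | _ n ih =>
  intro w x u hn hu
  rcases List.eq_nil_or_concat u with rfl | ⟨u', i, rfl⟩
  · rw [shL_nil] at hu
    have h1 := left_ne_zero_of_mul hu
    have h2 := right_ne_zero_of_mul hu
    have h1' : w = [] := by by_contra h; simp [wd, h] at h1
    have h2' : x = [] := by by_contra h; simp [wd, h] at h2
    subst h1' h2'; simp
  · rw [List.concat_eq_append] at hu ⊢
    rw [← del_apply, del_shL, Finsupp.add_apply, kk_wd, map_smul, LinearMap.smul_apply,
      Finsupp.smul_apply] at hu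
    by_cases h : shL p (del i (wd w)) (wd x) u' = 0
    · rw [h, zero_add] at hu
      have hu := right_ne_zero_of_smul hu
      rcases List.eq_nil_or_concat x with rfl | ⟨x', b, rfl⟩
      · simp [del_nil] at hu
      · rw [List.concat_eq_append] at *
        rw [del_wd_snoc] at hu
        by_cases hb : i = b
        · subst hb
          rw [if_pos rfl] at hu
          have := ih _ (by simp at hn; omega) w x' u' rfl hu
          rw [← List.append_assoc]
          exact this.append_right _
        · simp [hb] at hu
    · rcases List.eq_nil_or_concat w with rfl | ⟨w', b, rfl⟩
      · simp [del_nil] at h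
      · rw [List.concat_eq_append] at *
        rw [del_wd_snoc] at h
        by_cases hb : i = b
        · subst hb
          rw [if_pos rfl] at h
          have := ih _ (by simp at hn; omega) w' x u' rfl h
          refine (this.append_right [i]).trans ?_
          rw [List.append_assoc, List.append_assoc]
          exact List.Perm.append_left _ List.perm_append_comm
        · simp [hb] at h

theorem kk_shL (i : Fin r) (f g : FA r) :
    kk p i (shL p f g) = shL p (kk p i f) (kk p i g) := by
  refine lin_ext₂ (f := (shL p).compr₂ (kk p i))
    (g := (shL p).compl₁₂ (kk p i) (kk p i)) (fun w x => ?_) f g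
  simp only [LinearMap.compr₂_apply, LinearMap.compl₁₂_apply]
  ext u
  rw [kk_wd, kk_wd, kk_apply]
  simp only [map_smul, LinearMap.smul_apply, Finsupp.smul_apply, smul_eq_mul]
  by_cases h : shL p (wd w) (wd x) u = 0
  · simp [h]
  · rw [pairW_perm p (shL_supp p _ w x u rfl h), pairW_append, neg_add, zpow_add₀ qq_ne_zero]
    ring

theorem shL_assoc_wd : ∀ (n : ℕ) (w x y : Word r), w.length + x.length + y.length = n →
    shL p (shL p (wd w) (wd x)) (wd y) = shL p (wd w) (shL p (wd x) (wd y)) := by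
  intro n
  induction n using Nat.strong_induction_on with
  | _ n ih =>
  intro w x y hn
  refine FA_ext ?_ fun i => ?_
  · simp only [shL_nil, mul_assoc]
  · have h1 : shL p (shL p (del i (wd w)) (wd x)) (wd y)
        = shL p (del i (wd w)) (shL p (wd x) (wd y)) := by
      rcases del_wd i w with h | ⟨w', hl, h⟩
      · simp [h]
      · rw [h]; exact ih _ (by omega) w' x y rfl
    have h2 : shL p (shL p (wd w) (del i (wd x))) (wd y)
        = shL p (wd w) (shL p (del i (wd x)) (wd y)) := by
      rcases del_wd i x with h | ⟨w', hl, h⟩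
      · simp [h]
      · rw [h]; exact ih _ (by omega) w w' y rfl
    have h3 : shL p (shL p (wd w) (wd x)) (del i (wd y))
        = shL p (wd w) (shL p (wd x) (del i (wd y))) := by
      rcases del_wd i y with h | ⟨w', hl, h⟩
      · simp [h]
      · rw [h]; exact ih _ (by omega) w x w' rfl
    simp only [del_shL, kk_shL, map_add, LinearMap.add_apply]
    rw [h1]
    simp only [kk_wd, map_smul, LinearMap.smul_apply]
    rw [h2, h3, add_assoc]

theorem shL_assoc (f g h : FA r) : shL p (shL p f g) h = shL p f (shL p g h) := by
  refine lin_ext (f := shL p (shL p f g)) (g := shL p f ∘ₗ shL p g) (fun y => ?_) h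
  refine lin_ext₂ (f := (shL p).compr₂ ((shL p).flip (wd y)))
    (g := (shL p).compl₂ ((shL p).flip (wd y))) (fun w x => ?_) f g
  simp only [LinearMap.compr₂_apply, LinearMap.compl₂_apply, LinearMap.flip_apply]
  exact shL_assoc_wd p _ w x y rfl

/-! ### The map `Ξ` -/

def xiL : FA r →ₗ[K] FA r := Finsupp.linearCombination K (xiWord p)

theorem xi_eq (f : FA r) : xi p f = xiL p f := rfl

theorem xiL_wd (w : Word r) : xiL p (wd w) = xiWord p w := by simp [xiL, wd]

theorem xiWord_cons (i : Fin r) (w : Word r) :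
    xiWord p (i :: w) = shL p (wd [i]) (xiWord p w) := by
  rw [xiWord, shuffle_eq]

theorem shL_supp' (w : Word r) (f : FA r) (v : Word r) (hf : ∀ u, f u ≠ 0 → u.Perm v) (u : Word r)
    (h : shL p (wd w) f u ≠ 0) : u.Perm (w ++ v) := by
  rw [← Finsupp.sum_single f, Finsupp.sum, map_sum, Finsupp.finset_sum_apply] at h
  obtain ⟨x, hx, h'⟩ := Finset.exists_ne_zero_of_sum_ne_zero h
  rw [single_eq, map_smul, Finsupp.smul_apply] at h'
  have h2 := shL_supp p _ w x u rfl (right_ne_zero_of_smul h')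
  exact h2.trans ((hf x (by simpa using hx)).append_left w)

theorem xiWord_supp (w u : Word r) (h : xiWord p w u ≠ 0) : u.Perm w := by
  induction w generalizing u with
  | nil =>
    rw [xiWord] at h
    have : u = [] := by by_contra h'; exact h (by simp [Ne.symm h'])
    simp [this]
  | cons i w ih =>
    rw [xiWord_cons] at h
    exact shL_supp' p [i] _ w (fun u hu => ih u hu) u h

theorem xiWord_append (w x : Word r) :
    xiWord p (w ++ x) = shL p (xiWord p w) (xiWord p x) := by
  induction w with
  | nil => rw [List.nil_append]; exact (shL_one_left p _).symm
  | cons i w ih => rw [List.cons_append, xiWord_cons, xiWord_cons, ih, shL_assoc]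

def cmulL : FA r →ₗ[K] FA r →ₗ[K] FA r :=
  Finsupp.linearCombination K fun w => Finsupp.linearCombination K fun x => wd (w ++ x)

theorem cmul_eq (f g : FA r) : cmul f g = cmulL f g := by
  unfold cmul cmulL
  rw [Finsupp.linearCombination_apply, LinearMap.finsupp_sum_apply]
  refine Finsupp.sum_congr fun w _ => ?_
  rw [LinearMap.smul_apply, Finsupp.linearCombination_apply, Finsupp.smul_sum]
  refine Finsupp.sum_congr fun x _ => ?_
  rw [← mul_smul, ← single_eq]

theorem cmulL_wd (w x : Word r) : cmulL (wd w) (wd x) = wd (w ++ x) := by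
  simp [cmulL, wd]

theorem xi_cmul (f g : FA r) : xi p (cmul f g) = shuffle p (xi p f) (xi p g) := by
  rw [cmul_eq, xi_eq, shuffle_eq, xi_eq, xi_eq]
  refine lin_ext₂ (f := cmulL.compr₂ (xiL p))
    (g := (shL p).compl₁₂ (xiL p) (xiL p)) (fun w x => ?_) f g
  simp only [LinearMap.compr₂_apply, LinearMap.compl₁₂_apply]
  rw [cmulL_wd, xiL_wd, xiL_wd, xiL_wd, xiWord_append]

theorem inU_iff (h : FA r) : InU p h ↔ ∃ f : FA r, xi p f = h := by
  constructor
  · intro hU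
    induction hU with
    | letter i =>
      refine ⟨wd [i], ?_⟩
      rw [xi_eq, xiL_wd, xiWord_cons]; exact shL_one_right p _
    | one => exact ⟨wd [], by rw [xi_eq, xiL_wd]; rfl⟩
    | add _ _ hf hg =>
      obtain ⟨f, rfl⟩ := hf
      obtain ⟨g, rfl⟩ := hg
      exact ⟨f + g, by simp [xi_eq]⟩
    | smul c _ hf =>
      obtain ⟨f, rfl⟩ := hf
      exact ⟨c • f, by simp [xi_eq]⟩
    | mul _ _ hf hg =>
      obtain ⟨f, rfl⟩ := hf
      obtain ⟨g, rfl⟩ := hg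
      exact ⟨cmul f g, xi_cmul p f g⟩
  · rintro ⟨f, rfl⟩
    have hw : ∀ w, InU p (xiWord p w) := by
      intro w
      induction w with
      | nil => exact InU.one
      | cons i w ih => exact InU.mul (InU.letter i) ih
    rw [xi_eq]
    induction f using Finsupp.induction_linear with
    | zero =>
      have := InU.smul (p := p) 0 InU.one
      simpa using this
    | add f g hf hg => rw [map_add]; exact InU.add hf hg
    | single w c => rw [single_eq, map_smul, xiL_wd]; exact InU.smul c (hw w)

end Shuffle

/-! ### The free algebra and `Ξ` -/

section Kernel

def toFr : FA r →ₗ[K] Fr r :=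
  Finsupp.linearCombination K fun w => (w.map (FreeAlgebra.ι K)).prod

theorem toFr_wd (w : Word r) : toFr (wd w) = (w.map (FreeAlgebra.ι K)).prod := by
  simp [toFr, wd]

theorem toFr_nil : toFr (wd ([] : Word r)) = 1 := by rw [toFr_wd]; rfl

theorem toFr_cons (i : Fin r) (w : Word r) :
    toFr (wd (i :: w)) = FreeAlgebra.ι K i * toFr (wd w) := by
  rw [toFr_wd, toFr_wd, List.map_cons, List.prod_cons]

theorem toFr_cmul (f g : FA r) : toFr (cmulL f g) = toFr f * toFr g := by
  refine lin_ext₂ (f := cmulL.compr₂ toFr)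
    (g := (LinearMap.mul K (Fr r)).compl₁₂ toFr toFr) (fun w x => ?_) f g
  simp only [LinearMap.compr₂_apply, LinearMap.compl₁₂_apply, LinearMap.mul_apply']
  rw [cmulL_wd, toFr_wd, toFr_wd, toFr_wd, List.map_append, List.prod_append]

def ofFr : Fr r →ₗ[K] FA r where
  toFun x := (FreeAlgebra.lift K
    (fun i => (Finsupp.lmapDomain K K (List.cons i) : Module.End K (FA r)))) x (wd [])
  map_add' x y := by simp
  map_smul' c x := by simp

theorem ofFr_toFr (f : FA r) : ofFr (toFr f) = f := by
  refine lin_ext (f := ofFr ∘ₗ toFr) (g := LinearMap.id) (fun w => ?_) f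
  rw [LinearMap.comp_apply, LinearMap.id_apply]
  induction w with
  | nil => rw [toFr_nil]; simp [ofFr]
  | cons i w ih =>
    rw [toFr_cons]
    have : ofFr (FreeAlgebra.ι K i * toFr (wd w)) =
        Finsupp.lmapDomain K K (List.cons i) (ofFr (toFr (wd w))) := by
      simp [ofFr]
    rw [this, ih]
    simp [wd, Finsupp.mapDomain_single]

theorem toFr_injective : Function.Injective (toFr (r := r)) :=
  Function.LeftInverse.injective ofFr_toFr

theorem toFr_surj (x : Fr r) : ∃ f, toFr f = x := by
  have : x ∈ LinearMap.range (toFr (r := r)) := by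
    refine free_ind _ (LinearMap.mem_range.2 ⟨wd [], toFr_nil⟩) ?_ x
    rintro j _ ⟨f, rfl⟩
    refine ⟨cmulL (wd [j]) f, ?_⟩
    rw [toFr_cmul, toFr_cons, toFr_nil, mul_one]
  exact this

variable (p : Fin r → Fin r → ℤ)

/-- `Ξ` on the free algebra. -/
def XX : Fr r →ₗ[K] FA r := xiL p ∘ₗ ofFr

theorem XX_toFr (f : FA r) : XX p (toFr f) = xiL p f := by
  rw [XX, LinearMap.comp_apply, ofFr_toFr]

theorem XX_one : XX p 1 = wd [] := by
  rw [← toFr_nil, XX_toFr, xiL_wd, xiWord]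

theorem XX_mul (x y : Fr r) : XX p (x * y) = shL p (XX p x) (XX p y) := by
  obtain ⟨f, rfl⟩ := toFr_surj x
  obtain ⟨g, rfl⟩ := toFr_surj y
  rw [← toFr_cmul, XX_toFr, XX_toFr, XX_toFr]
  have := xi_cmul p f g
  rwa [cmul_eq, xi_eq, shuffle_eq, xi_eq, xi_eq] at this

theorem XX_th (i : Fin r) : XX p (FreeAlgebra.ι K i) = wd [i] := by
  have : (FreeAlgebra.ι K i : Fr r) = toFr (wd [i]) := by
    rw [toFr_cons, toFr_nil, mul_one]
  rw [this, XX_toFr, xiL_wd, xiWord_cons, xiWord, shL_one_right]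

theorem XX_th_nil (i : Fin r) : XX p (FreeAlgebra.ι K i) [] = 0 := by
  rw [XX_th]; simp

theorem XX_mul_nil (x y : Fr r) : XX p (x * y) [] = XX p x [] * XX p y [] := by
  rw [XX_mul, shL_nil]

theorem del_XX (hs : ∀ i j, p i j = p j i) (i : Fin r) (x : Fr r) :
    del i (XX p x) = XX p ((freeSkew p).D i x) := by
  have : x ∈ LinearMap.eqLocus (del i ∘ₗ XX p) (XX p ∘ₗ (freeSkew p).D i) := by
    refine free_ind _ ?_ ?_ x
    · rw [LinearMap.mem_eqLocus, LinearMap.comp_apply, LinearMap.comp_apply, XX_one, del_nil,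
        SkewData.D_one, map_zero]
    · intro j x hx
      rw [LinearMap.mem_eqLocus, LinearMap.comp_apply, LinearMap.comp_apply] at hx ⊢
      have h := (freeSkew p).D_th_mul i j x
      rw [show (freeSkew p).th j = FreeAlgebra.ι K j from rfl] at h
      rw [h, XX_mul, del_shL, hx, XX_th, kk_wd, map_add, map_smul, map_smul, XX_mul, XX_th,
        LinearMap.smul_apply]
      have e : pairW p [j] [i] = p i j := by rw [pairW_single]; simp [hs j i]
      rw [e]
      congr 1
      have := del_wd_snoc i j []
      rw [List.nil_append] at this
      rw [this]
      split_ifs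
      · rw [shL_one_left]
      · simp
  exact this

theorem XX_k_nil (i : Fin r) (x : Fr r) : XX p ((freeSkew p).k i x) [] = XX p x [] := by
  have : x ∈ LinearMap.eqLocus (Finsupp.lapply [] ∘ₗ XX p ∘ₗ (freeSkew p).k i)
      (Finsupp.lapply [] ∘ₗ XX p) := by
    refine free_ind _ ?_ ?_ x
    · simp [(freeSkew p).k_one]
    · intro j x hx
      simp only [LinearMap.mem_eqLocus, LinearMap.comp_apply, Finsupp.lapply_apply] at hx ⊢
      have h := (freeSkew p).k_th_mul i j x
      rw [show (freeSkew p).th j = FreeAlgebra.ι K j from rfl] at h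
      rw [h, map_smul, Finsupp.smul_apply, XX_mul_nil, XX_mul_nil, XX_th_nil]
      simp
  exact this

theorem XX_R_nil (i : Fin r) (x : Fr r) :
    XX p ((freeSkew p).R i x) [] = XX p ((freeSkew p).D i x) [] := by
  have : x ∈ LinearMap.eqLocus (Finsupp.lapply [] ∘ₗ XX p ∘ₗ (freeSkew p).R i)
      (Finsupp.lapply [] ∘ₗ XX p ∘ₗ (freeSkew p).D i) := by
    refine free_ind _ ?_ ?_ x
    · simp [SkewData.R_one, SkewData.D_one]
    · intro j x hx
      simp only [LinearMap.mem_eqLocus, LinearMap.comp_apply, Finsupp.lapply_apply] at hx ⊢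
      have h := (freeSkew p).D_th_mul i j x
      have h' := (freeSkew p).R_th_mul i j x
      rw [show (freeSkew p).th j = FreeAlgebra.ι K j from rfl] at h h'
      rw [h, h', map_add, map_add, map_smul, Finsupp.add_apply, Finsupp.add_apply,
        Finsupp.smul_apply, XX_mul_nil, XX_mul_nil, XX_th_nil]
      split_ifs
      · rw [XX_k_nil]; simp
      · simp
  exact this

/-- Homogeneous part of degree `n` (by word length). -/
def WW (r n : ℕ) : Submodule K (Fr r) :=
  (Finsupp.supported K K {w : Word r | w.length = n}).map toFr

theorem WW_word (w : Word r) : toFr (wd w) ∈ WW r w.length :=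
  ⟨wd w, Finsupp.single_mem_supported K _ rfl, rfl⟩

theorem WW_le (n : ℕ) (P : Submodule K (Fr r)) (h : ∀ w : Word r, w.length = n → toFr (wd w) ∈ P) :
    WW r n ≤ P := by
  rw [WW, Submodule.map_le_iff_le_comap, Finsupp.supported_eq_span_single, Submodule.span_le]
  rintro _ ⟨w, hw, rfl⟩
  exact h w hw

theorem WW_th (n : ℕ) (j : Fin r) (x : Fr r) (hx : x ∈ WW r n) :
    FreeAlgebra.ι K j * x ∈ WW r (n + 1) := by
  have : WW r n ≤ (WW r (n + 1)).comap (LinearMap.mulLeft K (FreeAlgebra.ι K j)) := by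
    refine WW_le n _ fun w hw => ?_
    rw [Submodule.mem_comap, LinearMap.mulLeft_apply, ← toFr_cons, ← hw]
    exact WW_word (j :: w)
  exact this hx

theorem k_toFr_wd (i : Fin r) (w : Word r) :
    (freeSkew p).k i (toFr (wd w)) = qq ^ (-(w.map (p i)).sum) • toFr (wd w) := by
  induction w with
  | nil => simp [toFr_nil, (freeSkew p).k_one]
  | cons j w ih =>
    have h := (freeSkew p).k_th_mul i j (toFr (wd w))
    rw [show (freeSkew p).th j = FreeAlgebra.ι K j from rfl] at h
    rw [toFr_cons, h, ih, mul_smul_comm, smul_smul, ← zpow_add₀ qq_ne_zero, List.map_cons,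
      List.sum_cons, neg_add]

theorem WW_k (n : ℕ) (i : Fin r) (x : Fr r) (hx : x ∈ WW r n) : (freeSkew p).k i x ∈ WW r n := by
  have : WW r n ≤ (WW r n).comap ((freeSkew p).k i) := by
    refine WW_le n _ fun w hw => ?_
    subst hw
    rw [Submodule.mem_comap, k_toFr_wd]
    exact Submodule.smul_mem _ _ (WW_word w)
  exact this hx

theorem WW_D (n : ℕ) (i : Fin r) (x : Fr r) (hx : x ∈ WW r (n + 1)) :
    (freeSkew p).D i x ∈ WW r n := by
  have : ∀ n, WW r (n + 1) ≤ (WW r n).comap ((freeSkew p).D i) := by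
    intro n
    induction n with
    | zero =>
      refine WW_le _ _ fun w hw => ?_
      rcases w with _ | ⟨j, w⟩
      · simp at hw
      simp only [List.length_cons, zero_add, Nat.add_eq_right, List.length_eq_zero_iff] at hw
      subst hw
      rw [Submodule.mem_comap, toFr_cons, toFr_nil, mul_one]
      have h := (freeSkew p).D_th i j
      rw [show (freeSkew p).th j = FreeAlgebra.ι K j from rfl] at h
      rw [h]
      split_ifs
      · rw [← toFr_nil]; exact WW_word []
      · exact Submodule.zero_mem _
    | succ n ih =>
      refine WW_le _ _ fun w hw => ?_
      rcases w with _ | ⟨j, w⟩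
      · simp at hw
      simp only [List.length_cons, add_left_inj] at hw
      have hww : toFr (wd w) ∈ WW r (n + 1) := by rw [← hw]; exact WW_word w
      rw [Submodule.mem_comap, toFr_cons]
      have h := (freeSkew p).D_th_mul i j (toFr (wd w))
      rw [show (freeSkew p).th j = FreeAlgebra.ι K j from rfl] at h
      rw [h]
      refine Submodule.add_mem _ ?_ (Submodule.smul_mem _ _ (WW_th _ _ _ (ih hww)))
      split_ifs
      · exact hww
      · exact Submodule.zero_mem _
  exact this n hx

theorem WW_R (n : ℕ) (i : Fin r) (x : Fr r) (hx : x ∈ WW r (n + 1)) :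
    (freeSkew p).R i x ∈ WW r n := by
  have : ∀ n, WW r (n + 1) ≤ (WW r n).comap ((freeSkew p).R i) := by
    intro n
    induction n with
    | zero =>
      refine WW_le _ _ fun w hw => ?_
      rcases w with _ | ⟨j, w⟩
      · simp at hw
      simp only [List.length_cons, zero_add, Nat.add_eq_right, List.length_eq_zero_iff] at hw
      subst hw
      rw [Submodule.mem_comap, toFr_cons, toFr_nil, mul_one]
      have h := (freeSkew p).R_th i j
      rw [show (freeSkew p).th j = FreeAlgebra.ι K j from rfl] at h
      rw [h]
      split_ifs
      · rw [← toFr_nil]; exact WW_word []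
      · exact Submodule.zero_mem _
    | succ n ih =>
      refine WW_le _ _ fun w hw => ?_
      rcases w with _ | ⟨j, w⟩
      · simp at hw
      simp only [List.length_cons, add_left_inj] at hw
      have hww : toFr (wd w) ∈ WW r (n + 1) := by rw [← hw]; exact WW_word w
      rw [Submodule.mem_comap, toFr_cons]
      have h := (freeSkew p).R_th_mul i j (toFr (wd w))
      rw [show (freeSkew p).th j = FreeAlgebra.ι K j from rfl] at h
      rw [h]
      refine Submodule.add_mem _ (WW_th _ _ _ (ih hww)) ?_
      split_ifs
      · exact WW_k p _ _ _ hww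
      · exact Submodule.zero_mem _
  exact this n hx

theorem WW_zero (x : Fr r) (hx : x ∈ WW r 0) : ∃ c : K, x = c • 1 := by
  have : WW r 0 ≤ Submodule.span K {1} := by
    refine WW_le _ _ fun w hw => ?_
    rw [List.length_eq_zero_iff] at hw
    subst hw
    rw [toFr_nil]
    exact Submodule.subset_span rfl
  obtain ⟨c, hc⟩ := Submodule.mem_span_singleton.1 (this hx)
  exact ⟨c, hc.symm⟩

theorem XX_R (hs : ∀ i j, p i j = p j i) (n : ℕ) (i : Fin r) : ∀ x ∈ WW r n, XX p x = 0 →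
    XX p ((freeSkew p).R i x) = 0 := by
  induction n with
  | zero =>
    intro x hx _
    obtain ⟨c, rfl⟩ := WW_zero x hx
    rw [map_smul, SkewData.R_one, smul_zero, map_zero]
  | succ n ih =>
    intro x hx h0
    have hD : ∀ j, XX p ((freeSkew p).D j x) = 0 := by
      intro j; rw [← del_XX p hs, h0, map_zero]
    refine FA_ext ?_ fun j => ?_
    · rw [XX_R_nil, hD]
    · rw [del_XX p hs, (freeSkew p).D_R hs, ih _ (WW_D p n j x hx) (hD j), map_zero]

/-! ### The Serre ideal -/

variable (C : CartanData r)

theorem C_symm (i j : Fin r) : C.p i j = C.p j i := C.dsymm i j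

theorem C_dpos (i : Fin r) : 0 < C.d i := by
  rcases C.dval i with h | h | h <;> omega

theorem C_pii (i : Fin r) : C.p i i = 2 * C.d i := by
  rw [CartanData.p, C.diag, mul_comm]

theorem C_pos (i : Fin r) : 0 < C.p i i := by
  have := C_dpos C i
  rw [C_pii]; omega

/-- The Serre element as an iterated q-commutator. -/
def ss (i j : Fin r) : Fr r := ((freeSkew C.p).F i ^ (1 - C.a i j).toNat) (FreeAlgebra.ι K j)

theorem C_nat (i j : Fin r) (h : i ≠ j) : ∃ n : ℕ, (1 - C.a i j).toNat = n + 1 ∧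
    (n : ℤ) = -C.a i j := by
  have := C.offdiag i j h
  exact ⟨(-C.a i j).toNat, by omega, by omega⟩

theorem C_hn (i j : Fin r) (n : ℕ) (h : (n : ℤ) = -C.a i j) :
    C.p i i * n + 2 * C.p i j = 0 := by
  rw [C_pii, h, CartanData.p]; ring

theorem ss_D (i j l : Fin r) (h : i ≠ j) : (freeSkew C.p).D l (ss C i j) = 0 := by
  obtain ⟨n, hn, hn'⟩ := C_nat C i j h
  rw [ss, hn]
  exact (freeSkew C.p).D_serre (C_symm C) i j l h (C_pos C i) n (C_hn C i j n hn')

theorem ss_R (i j l : Fin r) (h : i ≠ j) : (freeSkew C.p).R l (ss C i j) = 0 := by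
  obtain ⟨n, hn, hn'⟩ := C_nat C i j h
  rw [ss, hn]
  exact (freeSkew C.p).R_serre (C_symm C) i j l h n (C_hn C i j n hn')

theorem ss_k (i j l : Fin r) : ∃ c : K, (freeSkew C.p).k l (ss C i j) = c • ss C i j := by
  have h := (freeSkew C.p).k_th l j
  rw [show (freeSkew C.p).th j = FreeAlgebra.ι K j from rfl] at h
  rw [ss, (freeSkew C.p).k_Fpow, h, map_smul, smul_smul]
  exact ⟨_, rfl⟩

theorem ss_XX (i j : Fin r) (h : i ≠ j) : XX C.p (ss C i j) = 0 := by
  refine FA_ext ?_ fun l => ?_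
  · obtain ⟨n, hn, hn'⟩ := C_nat C i j h
    rw [ss, hn, pow_succ', Module.End.mul_apply, (freeSkew C.p).F_apply, map_sub,
      Finsupp.sub_apply, XX_mul_nil, XX_mul_nil]
    rw [show (freeSkew C.p).th i = FreeAlgebra.ι K i from rfl, XX_th_nil]
    simp
  · rw [del_XX _ (C_symm C), ss_D C i j l h, map_zero, map_zero]

theorem toFr_replicate (k : ℕ) (i : Fin r) :
    toFr (wd (List.replicate k i)) = FreeAlgebra.ι K i ^ k := by
  rw [toFr_wd]; simp

theorem toFr_append (w x : Word r) : toFr (wd (w ++ x)) = toFr (wd w) * toFr (wd x) := by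
  rw [← cmulL_wd, toFr_cmul]

theorem toFr_serre (i j : Fin r) (h : i ≠ j) :
    ss C i j = (-1 : K) ^ (1 - C.a i j).toNat • toFr (serre C i j) := by
  obtain ⟨n, hn, hn'⟩ := C_nat C i j h
  have hx := (freeSkew C.p).Fpow_expand i j (C.d i) (C_dpos C i) (C_pii C i) (n + 1)
  rw [ss, serre, hn]
  rw [show ∀ j, (freeSkew C.p).th j = FreeAlgebra.ι K j from fun _ => rfl,
    show ∀ j, (freeSkew C.p).th j = FreeAlgebra.ι K j from fun _ => rfl] at hx
  rw [hx, map_sum, Finset.smul_sum]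
  refine Finset.sum_congr rfl fun k _ => ?_
  have e : -C.p i j - C.d i * (((n + 1 : ℕ) : ℤ) - 1) = 0 := by
    rw [CartanData.p]; push_cast; rw [add_sub_cancel_right, hn']; ring
  have h2 : toFr (wd (List.replicate k i ++ [j] ++ List.replicate (n + 1 - k) i)) =
      FreeAlgebra.ι K i ^ k * FreeAlgebra.ι K j * FreeAlgebra.ι K i ^ (n + 1 - k) := by
    rw [toFr_append, toFr_append, toFr_replicate, toFr_replicate, toFr_cons, toFr_nil, mul_one]
  rw [map_smul, h2, smul_smul, serC, e, mul_zero, zpow_zero, mul_one, pow_add, mul_assoc]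

def JJ : Submodule K (Fr r) :=
  Submodule.span K {z | ∃ (x y : Fr r) (i j : Fin r), i ≠ j ∧ z = x * ss C i j * y}

theorem JJ_gen (x y : Fr r) (i j : Fin r) (h : i ≠ j) : x * ss C i j * y ∈ JJ C :=
  Submodule.subset_span ⟨x, y, i, j, h, rfl⟩

theorem JJ_le (f : Fr r →ₗ[K] Fr r)
    (h : ∀ x y i j, i ≠ j → f (x * ss C i j * y) ∈ JJ C) : ∀ z ∈ JJ C, f z ∈ JJ C := by
  intro z hz
  have : JJ C ≤ (JJ C).comap f := by
    refine Submodule.span_le.2 ?_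
    rintro _ ⟨x, y, i, j, hij, rfl⟩
    exact h x y i j hij
  exact this hz

theorem JJ_l (x : Fr r) : ∀ z ∈ JJ C, x * z ∈ JJ C := by
  refine JJ_le C (LinearMap.mulLeft K x) fun a b i j h => ?_
  rw [LinearMap.mulLeft_apply, ← mul_assoc, ← mul_assoc]
  exact JJ_gen C _ _ i j h

theorem JJ_r (z : Fr r) (hz : z ∈ JJ C) (y : Fr r) : z * y ∈ JJ C := by
  refine JJ_le C (LinearMap.mulRight K y) (fun a b i j h => ?_) z hz
  rw [LinearMap.mulRight_apply, mul_assoc]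
  exact JJ_gen C _ _ i j h

theorem JJ_k (l : Fin r) : ∀ z ∈ JJ C, (freeSkew C.p).k l z ∈ JJ C := by
  refine JJ_le C _ fun a b i j h => ?_
  obtain ⟨c, hc⟩ := ss_k C i j l
  rw [(freeSkew C.p).k_mul, (freeSkew C.p).k_mul, hc, mul_smul_comm, smul_mul_assoc]
  exact Submodule.smul_mem _ _ (JJ_gen C _ _ i j h)

theorem JJ_D (l : Fin r) : ∀ z ∈ JJ C, (freeSkew C.p).D l z ∈ JJ C := by
  refine JJ_le C _ fun a b i j h => ?_
  obtain ⟨c, hc⟩ := ss_k C i j l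
  rw [(freeSkew C.p).D_mul, (freeSkew C.p).D_mul, (freeSkew C.p).k_mul, hc, ss_D C i j l h,
    mul_zero, add_zero, mul_smul_comm, smul_mul_assoc]
  exact Submodule.add_mem _ (JJ_gen C _ _ i j h) (Submodule.smul_mem _ _ (JJ_gen C _ _ i j h))

theorem JJ_R (l : Fin r) : ∀ z ∈ JJ C, (freeSkew C.p).R l z ∈ JJ C := by
  refine JJ_le C _ fun a b i j h => ?_
  obtain ⟨c, hc⟩ := ss_k C i j l
  rw [(freeSkew C.p).R_mul, (freeSkew C.p).R_mul, ss_R C i j l h,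
    mul_zero, zero_add, hc, mul_smul_comm, smul_mul_assoc]
  exact Submodule.add_mem _ (JJ_gen C _ _ i j h) (Submodule.smul_mem _ _ (JJ_gen C _ _ i j h))

theorem JJ_XX (z : Fr r) (hz : z ∈ JJ C) : XX C.p z = 0 := by
  have : JJ C ≤ LinearMap.ker (XX C.p) := by
    refine Submodule.span_le.2 ?_
    rintro _ ⟨x, y, i, j, hij, rfl⟩
    rw [SetLike.mem_coe, LinearMap.mem_ker, XX_mul, XX_mul, ss_XX C i j hij]
    simp
  exact this hz

/-- The ideal of the statement. -/
def JS : Submodule K (FA r) :=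
  Submodule.span K {x : FA r | ∃ (z t : Word r) (i j : Fin r), i ≠ j ∧
        x = cmul (cmul (Finsupp.single z 1) (serre C i j)) (Finsupp.single t 1)}

theorem JS_gen (f g : FA r) (i j : Fin r) (h : i ≠ j) :
    cmulL (cmulL f (serre C i j)) g ∈ JS C := by
  have h1 : ∀ z t : Word r, cmulL (cmulL (wd z) (serre C i j)) (wd t) ∈ JS C := by
    intro z t
    refine Submodule.subset_span ⟨z, t, i, j, h, ?_⟩
    rw [cmul_eq, cmul_eq]
  have h2 : ∀ (z : Word r) (g : FA r), cmulL (cmulL (wd z) (serre C i j)) g ∈ JS C := by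
    intro z g
    induction g using Finsupp.induction_linear with
    | zero => simp
    | add a b ha hb => rw [map_add]; exact Submodule.add_mem _ ha hb
    | single w c => rw [single_eq, map_smul]; exact Submodule.smul_mem _ _ (h1 z w)
  induction f using Finsupp.induction_linear with
  | zero => simp
  | add a b ha hb =>
    rw [map_add, LinearMap.add_apply, map_add, LinearMap.add_apply]
    exact Submodule.add_mem _ ha hb
  | single w c =>
    rw [single_eq, map_smul, LinearMap.smul_apply, map_smul, LinearMap.smul_apply]
    exact Submodule.smul_mem _ _ (h2 w g)

theorem toFr_JS (f : FA r) : toFr f ∈ JJ C ↔ f ∈ JS C := by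
  constructor
  · intro hf
    have : JJ C ≤ (JS C).map toFr := by
      refine Submodule.span_le.2 ?_
      rintro _ ⟨x, y, i, j, hij, rfl⟩
      obtain ⟨f, rfl⟩ := toFr_surj x
      obtain ⟨g, rfl⟩ := toFr_surj y
      rw [toFr_serre C i j hij, mul_smul_comm, smul_mul_assoc, ← toFr_cmul, ← toFr_cmul]
      exact Submodule.smul_mem _ _ ⟨_, JS_gen C f g i j hij, rfl⟩
    obtain ⟨g, hg, e⟩ := this hf
    rwa [← toFr_injective e]
  · intro hf
    have : JS C ≤ (JJ C).comap toFr := by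
      refine Submodule.span_le.2 ?_
      rintro _ ⟨z, t, i, j, hij, rfl⟩
      rw [SetLike.mem_coe, Submodule.mem_comap, cmul_eq, cmul_eq, toFr_cmul, toFr_cmul]
      have e : toFr (serre C i j) = ((-1 : K) ^ (1 - C.a i j).toNat) • ss C i j := by
        rw [toFr_serre C i j hij, smul_smul, ← mul_pow]; simp
      rw [e, mul_smul_comm, smul_mul_assoc]
      exact Submodule.smul_mem _ _ (JJ_gen C _ _ i j hij)
    exact this hf

/-! ### The main induction -/

/-- Homogeneous component of degree `ν`. -/
def hp (ν : Multiset (Fin r)) (f : FA r) : FA r :=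
  Finsupp.filter (fun w : Word r => (w : Multiset (Fin r)) = ν) f

theorem hp_add (ν : Multiset (Fin r)) (f g : FA r) : hp ν (f + g) = hp ν f + hp ν g :=
  Finsupp.filter_add

theorem hp_zero (ν : Multiset (Fin r)) : hp ν (0 : FA r) = 0 := by
  ext u; rw [hp, Finsupp.filter_apply]; simp

theorem hp_wd (ν : Multiset (Fin r)) (w : Word r) :
    hp ν (wd w) = if (w : Multiset (Fin r)) = ν then wd w else 0 := by
  ext u
  rw [hp, Finsupp.filter_apply]
  by_cases h : w = u
  · subst h; split_ifs <;> rfl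
  · have : (wd w : FA r) u = 0 := Finsupp.single_eq_of_ne' h
    split_ifs <;> simp [this]

theorem xiL_hp (ν : Multiset (Fin r)) (f : FA r) : xiL p (hp ν f) = hp ν (xiL p f) := by
  induction f using Finsupp.induction_linear with
  | zero => rw [hp_zero, map_zero, hp_zero]
  | add a b ha hb => rw [hp_add, map_add, map_add, hp_add, ha, hb]
  | single w c =>
    have e : hp ν (xiWord p w) = if (w : Multiset (Fin r)) = ν then xiWord p w else 0 := by
      ext u
      rw [hp, Finsupp.filter_apply]
      by_cases h : xiWord p w u = 0
      · split_ifs <;> simp [h]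
      · have := Multiset.coe_eq_coe.2 (xiWord_supp p w u h)
        rw [this]
        split_ifs <;> rfl
    rw [single_eq, map_smul, xiL_wd]
    have e2 : ∀ g : FA r, hp ν (c • g) = c • hp ν g := fun g => Finsupp.filter_smul
    rw [e2, e2, map_smul, e, hp_wd]
    split_ifs with h
    · rw [xiL_wd]
    · rw [map_zero]

theorem hp_sum (f : FA r) :
    f = ∑ ν ∈ f.support.image (fun w : Word r => (w : Multiset (Fin r))), hp ν f := by
  ext w
  rw [Finsupp.finsetSum_apply]
  by_cases h : f w = 0
  · rw [h]
    symm
    refine Finset.sum_eq_zero fun ν _ => ?_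
    rw [hp, Finsupp.filter_apply, h, ite_self]
  · rw [Finset.sum_eq_single (w : Multiset (Fin r))]
    · rw [hp, Finsupp.filter_apply, if_pos rfl]
    · intro ν _ hν
      rw [hp, Finsupp.filter_apply, if_neg hν.symm]
    · intro h'
      exact absurd (Finset.mem_image_of_mem _ (Finsupp.mem_support_iff.2 h)) h'

theorem hp_mem (ν : Multiset (Fin r)) (f : FA r) :
    hp ν f ∈ Finsupp.supported K K {w : Word r | (w : Multiset (Fin r)) = ν} := by
  intro w hw
  rw [hp, Finset.mem_coe, Finsupp.support_filter, Finset.mem_filter] at hw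
  exact hw.2

theorem split_mem (f : FA r) (hf : xiL C.p f = 0)
    (h : ∀ ν, (∃ w ∈ f.support, (w : Multiset (Fin r)) = ν) →
      xiL C.p (hp ν f) = 0 → toFr (hp ν f) ∈ JJ C) : toFr f ∈ JJ C := by
  rw [hp_sum f, map_sum]
  refine Submodule.sum_mem _ fun ν hν => h ν ?_ ?_
  · simpa using hν
  · rw [xiL_hp, hf, hp_zero]

theorem k_hom (ν : Multiset (Fin r)) (f : FA r) (i : Fin r)
    (hf : f ∈ Finsupp.supported K K {w : Word r | (w : Multiset (Fin r)) = ν}) :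
    (freeSkew p).k i (toFr f) = qq ^ (-(ν.map (p i)).sum) • toFr f := by
  have : Finsupp.supported K K {w : Word r | (w : Multiset (Fin r)) = ν} ≤
      LinearMap.eqLocus ((freeSkew p).k i ∘ₗ toFr) (qq ^ (-(ν.map (p i)).sum) • toFr) := by
    rw [Finsupp.supported_eq_span_single, Submodule.span_le]
    rintro _ ⟨w, hw, rfl⟩
    have hw : (w : Multiset (Fin r)) = ν := hw
    subst hw
    have := k_toFr_wd p i w
    simpa using this
  exact this hf

theorem posdef_pos (ν : Multiset (Fin r)) (hν : ν ≠ 0) :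
    ∃ i, 0 < (ν.map (C.p i)).sum := by
  by_contra hcon
  push Not at hcon
  have hv : (fun i => (ν.count i : ℚ)) ≠ 0 := by
    intro h0
    apply hν
    rw [Multiset.eq_zero_iff_forall_notMem]
    intro a ha
    have h1 := congrFun h0 a
    simp only [Pi.zero_apply, Nat.cast_eq_zero, Multiset.count_eq_zero] at h1
    exact h1 ha
  have h := C.posdef _ hv
  have e : ∀ i, ((ν.map (C.p i)).sum : ℤ) = ∑ j, (ν.count j : ℤ) * C.p i j := by
    intro i
    rw [Finset.sum_multiset_map_count]
    simp only [nsmul_eq_mul]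
    refine Finset.sum_subset (Finset.subset_univ _) fun j _ hj => ?_
    rw [Multiset.mem_toFinset] at hj
    simp [Multiset.count_eq_zero.2 hj]
  refine absurd h (not_lt.2 ?_)
  refine Finset.sum_nonpos fun i _ => ?_
  have e2 : ∑ j, (ν.count i : ℚ) * (ν.count j : ℚ) * ((C.d i * C.a i j : ℤ) : ℚ) =
      (ν.count i : ℚ) * (((ν.map (C.p i)).sum : ℤ) : ℚ) := by
    rw [e]; push_cast; rw [Finset.mul_sum]
    refine Finset.sum_congr rfl fun j _ => ?_
    rw [CartanData.p]; push_cast; ring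
  rw [e2]
  exact mul_nonpos_of_nonneg_of_nonpos (by positivity) (by exact_mod_cast hcon i)

theorem prim_mem (u : Fr r) (hD : ∀ i, (freeSkew C.p).D i u ∈ JJ C)
    (hR : ∀ i, (freeSkew C.p).R i u ∈ JJ C) (i : Fin r) (m : ℤ) (hm : 0 < m)
    (hk : (freeSkew C.p).k i u = qq ^ (-m) • u) : u ∈ JJ C := by
  obtain ⟨B, _, _, T, π, h0, hth, hTk, hTD, hTR⟩ := exists_quot (freeSkew C.p) (JJ C) (JJ_l C)
    (JJ_r C) (JJ_k C) (JJ_D C) (JJ_R C)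
  rw [← h0]
  refine T.primitive i (C_pos C i) ?_ (π u) ?_ ?_ m hm ?_
  · intro j hj
    refine ⟨(1 - C.a i j).toNat, ?_⟩
    have e : ∀ n x, (T.F i ^ n) (π x) = π (((freeSkew C.p).F i ^ n) x) := by
      intro n
      induction n with
      | zero => intro x; simp
      | succ n ih =>
        intro x
        rw [pow_succ, Module.End.mul_apply, pow_succ, Module.End.mul_apply, ← ih]
        congr 1
        rw [T.F_apply, (freeSkew C.p).F_apply, map_sub, map_mul, map_mul, hth, hTk]
    rw [hth, e, h0]
    have := JJ_gen C 1 1 i j hj.symm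
    rwa [one_mul, mul_one] at this
  · rw [hTD, h0]; exact hD i
  · rw [hTR, h0]; exact hR i
  · rw [hTk, hk, map_smul]

theorem core (n : ℕ) : ∀ f : FA r, f ∈ Finsupp.supported K K {w : Word r | w.length = n} →
    xiL C.p f = 0 → toFr f ∈ JJ C := by
  induction n with
  | zero =>
    intro f hf h0
    obtain ⟨c, hc⟩ := WW_zero (toFr f) ⟨f, hf, rfl⟩
    rw [← XX_toFr, hc, map_smul, XX_one] at h0
    have : c = 0 := by
      have := DFunLike.congr_fun h0 []
      simpa using this
    rw [hc, this, zero_smul]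
    exact Submodule.zero_mem _
  | succ n ih =>
    have ihW : ∀ x ∈ WW r n, XX C.p x = 0 → x ∈ JJ C := by
      rintro _ ⟨g, hg, rfl⟩ h
      exact ih g hg (by rwa [XX_toFr] at h)
    intro f hf h0
    refine split_mem C f h0 ?_
    rintro _ ⟨w, hw, rfl⟩ hx
    have hlen : w.length = n + 1 := hf hw
    have hu : toFr (hp (w : Multiset (Fin r)) f) ∈ WW r (n + 1) := by
      refine ⟨_, ?_, rfl⟩
      refine Finsupp.supported_mono ?_ (hp_mem _ f)
      intro v hv
      have hv : (v : Multiset (Fin r)) = w := hv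
      rw [Multiset.coe_eq_coe] at hv
      rw [Set.mem_setOf_eq, hv.length_eq, hlen]
    rw [← XX_toFr] at hx
    have hν : (w : Multiset (Fin r)) ≠ 0 := by
      intro h
      rw [Multiset.coe_eq_zero] at h
      rw [h] at hlen
      simp at hlen
    obtain ⟨i, hi⟩ := posdef_pos C _ hν
    refine prim_mem C _ ?_ ?_ i _ hi (k_hom C.p _ _ i (hp_mem _ f))
    · intro l
      refine ihW _ (WW_D _ _ _ _ hu) ?_
      rw [← del_XX _ (C_symm C), hx, map_zero]
    · intro l
      exact ihW _ (WW_R _ _ _ _ hu) (XX_R _ (C_symm C) _ l _ hu hx)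

theorem kernel_iff (f : FA r) : xi C.p f = 0 ↔ f ∈ JS C := by
  rw [← toFr_JS, xi_eq]
  constructor
  · intro h0
    refine split_mem C f h0 ?_
    rintro _ ⟨w, hw, rfl⟩ hx
    refine core C w.length _ ?_ hx
    refine Finsupp.supported_mono ?_ (hp_mem _ f)
    intro v hv
    have hv : (v : Multiset (Fin r)) = w := hv
    rw [Multiset.coe_eq_coe] at hv
    exact hv.length_eq
  · intro h
    rw [← XX_toFr]
    exact JJ_XX C _ h

end Kernel

/-- Rosso–Green: the kernel of `Ξ` is the two-sided ideal of `(F, concatenation)`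
generated by the q-Serre elements `S_{ij}` (equivalently, the span of all
`z·S_{ij}·t`); moreover `Ξ` is multiplicative from the concatenation product to the
q-shuffle product and has image `𝒰`, so it induces a `ℚ(q)`-algebra isomorphism from
`U_q(n)` — the free algebra on `e_1,…,e_r` modulo the q-Serre relations — onto `𝒰`. -/
theorem rosso_green_embedding {r : ℕ} (hr : 1 ≤ r) (C : CartanData r) :
    (∀ f : FA r, xi C.p f = 0 ↔
      f ∈ Submodule.span K {x : FA r | ∃ (z t : Word r) (i j : Fin r), i ≠ j ∧
        x = cmul (cmul (Finsupp.single z 1) (serre C i j)) (Finsupp.single t 1)}) ∧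
    (∀ f g : FA r, xi C.p (cmul f g) = shuffle C.p (xi C.p f) (xi C.p g)) ∧
    (∀ h : FA r, InU C.p h ↔ ∃ f : FA r, xi C.p f = h) := by
  exact ⟨kernel_iff C, xi_cmul C.p, inU_iff C.p⟩
end
end
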